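/- arXiv:2310.10105 — 3 statements merged into one kernel-verified Lean document; each statement's English description precedes it below -/
import Mathlib

section
/- Let m ∈ ℕ, β ∈ ℕ₀ with β ≤ m−1, let q, r ∈ [1,∞] (with the convention 1/∞ = 0), and let p ∈ (1,∞). Suppose the number θ determined by the relation β − 1/r = θ(m − 1/p) − (1−θ)(1/q) satisfies θ ∈ [β/m, 1). Then there exists a constant C = C(β,p,q,r,m) > 0 such that every function h of class C^m on the circle S¹ = ℝ/ℤ satisfies |h|_{β,r} ≤ C · |h|_{m,p}^θ · |h|_q^{1−θ}. -/
open MeasureTheory Real Set Filter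
open scoped ENNReal Topology

noncomputable section

namespace BurgersTurb

/-- Lebesgue measure on one period `(0,1]`, representing the circle `S¹ = ℝ/ℤ`. -/
def μ₀ : Measure ℝ := volume.restrict (Set.Ioc (0:ℝ) 1)

/-- The `L_p(S¹)` norm (`p = ∞` gives the essential supremum) of a `1`-periodic
function, computed over one period. -/
def lpNorm (p : ℝ≥0∞) (f : ℝ → ℝ) : ℝ := (eLpNorm f p μ₀).toReal

/-- The norm `|h|_{k,p} = |∂^k h|_p + |h|_p`. -/
def normKP (k : ℕ) (p : ℝ≥0∞) (h : ℝ → ℝ) : ℝ :=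
  lpNorm p (iteratedDeriv k h) + lpNorm p h

/-!
Apply the bound `|g^(k)| ≤ C (∫ |g^(m)| + ∫ |g|)` on `[0, 1]`, `k < m`, to `g y = h (t + l y)`.
If `l` is chosen so that the two integrals on the right, replaced by `L_p` and `L_q` means, are
equal, then their sum is twice their geometric mean with weights `θ` and `1 - θ`, and the powers
of `l` combine to at most `l^(-1/r)` by the relation on `θ`. Balanced intervals are placed end to
end until they cover a period, and Hölder's inequality for sums adds up the local estimates.

Balanced lengths exist in `[δ, 1]` after replacing `|h|` by `|h| + ε` and `|h^(m)|` by
`|h^(m)| + sup |h| + ε`: the first is bounded below and the second dominates it. Then `ε → 0`, and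
`sup |h| ≤ C |h|_{m,p}`.
-/

section IntegralBounds

theorem exists_mul_abs_deriv_le {g : ℝ → ℝ} (hg : Differentiable ℝ g) {a b x y : ℝ} (hab : a < b)
    (hx : x ∈ Icc a (a + (b - a) / 3)) (hy : y ∈ Icc (b - (b - a) / 3) b) :
    ∃ ξ ∈ Icc a b, (b - a) * |deriv g ξ| ≤ 3 * (|g x| + |g y|) := by
  have hxy : (b - a) / 3 ≤ y - x := by linarith [hx.2, hy.1]
  obtain ⟨ξ, hξ, hslope⟩ := exists_deriv_eq_slope g (by linarith : x < y)
    hg.continuous.continuousOn hg.differentiableOn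
  refine ⟨ξ, ⟨hx.1.trans hξ.1.le, hξ.2.le.trans hy.2⟩, ?_⟩
  have hmul : (y - x) * |deriv g ξ| = |g y - g x| := by
    rw [hslope, abs_div, abs_of_pos (by linarith : 0 < y - x)]
    field_simp [(by linarith : y - x ≠ 0)]
  have hsub : |g y - g x| ≤ |g y| + |g x| := abs_sub _ _
  nlinarith [abs_nonneg (deriv g ξ)]

theorem exists_pow_mul_abs_iteratedDeriv_le (k : ℕ) :
    ∃ C : ℝ, 0 ≤ C ∧ ∀ f : ℝ → ℝ, ContDiff ℝ k f → ∀ a b : ℝ, a < b →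
      ∃ ξ ∈ Icc a b, (b - a) ^ (k + 1) * |iteratedDeriv k f ξ| ≤ C * ∫ x in a..b, |f x| := by
  induction k with
  | zero =>
    refine ⟨1, zero_le_one, fun f hf a b hab => ?_⟩
    have hc : Continuous fun x => |f x| := hf.continuous.abs
    obtain ⟨ξ, hξ, hmin⟩ := isCompact_Icc.exists_isMinOn (nonempty_Icc.2 hab.le) hc.continuousOn
    refine ⟨ξ, hξ, ?_⟩
    simpa using intervalIntegral.integral_mono_on (μ := volume) hab.le (f := fun _ => |f ξ|)
      (by simp) (hc.intervalIntegrable _ _) fun y hy => hmin hy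
  | succ k ih =>
    obtain ⟨C, hC, ih⟩ := ih
    refine ⟨6 * 3 ^ (k + 1) * C, by positivity, fun f hf a b hab => ?_⟩
    have third {u v : ℝ} (hau : a ≤ u) (hvb : v ≤ b) (huv : v - u = (b - a) / 3) :
        ∃ ξ ∈ Icc u v,
          (b - a) ^ (k + 1) * |iteratedDeriv k f ξ| ≤ 3 ^ (k + 1) * (C * ∫ x in a..b, |f x|) := by
      obtain ⟨ξ, hξ, h⟩ := ih f (hf.of_le (by exact_mod_cast k.le_succ)) u v (by linarith)
      have hint : ∫ x in u..v, |f x| ≤ ∫ x in a..b, |f x| :=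
        intervalIntegral.integral_mono_interval hau (by linarith) hvb
          (ae_of_all _ fun x => abs_nonneg _) (hf.continuous.abs.intervalIntegrable _ _)
      refine ⟨ξ, hξ, ?_⟩
      rw [huv, div_pow, div_mul_eq_mul_div, div_le_iff₀' (by positivity)] at h
      exact h.trans (by gcongr)
    obtain ⟨x, hx, hx'⟩ := third (v := a + (b - a) / 3) le_rfl (by linarith) (by ring)
    obtain ⟨y, hy, hy'⟩ := third (u := b - (b - a) / 3) (by linarith) le_rfl (by ring)
    obtain ⟨ξ, hξ, h⟩ := exists_mul_abs_deriv_le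
      (hf.differentiable_iteratedDeriv k (by exact_mod_cast k.lt_succ_self)) hab hx hy
    refine ⟨ξ, hξ, ?_⟩
    calc (b - a) ^ (k + 1 + 1) * |iteratedDeriv (k + 1) f ξ|
        = (b - a) ^ (k + 1) * ((b - a) * |deriv (iteratedDeriv k f) ξ|) := by
          rw [iteratedDeriv_succ]; ring
      _ ≤ (b - a) ^ (k + 1) * (3 * (|iteratedDeriv k f x| + |iteratedDeriv k f y|)) := by
          have : 0 ≤ b - a := by linarith
          gcongr
      _ ≤ 6 * 3 ^ (k + 1) * C * ∫ x in a..b, |f x| := by linarith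

theorem abs_le_abs_add_integral_abs_deriv {g : ℝ → ℝ} (hg : Differentiable ℝ g)
    (hc : Continuous (deriv g)) {a b x y : ℝ} (hx : x ∈ Icc a b) (hy : y ∈ Icc a b) :
    |g x| ≤ |g y| + ∫ z in a..b, |deriv g z| := by
  have hsub {u v : ℝ} (hu : u ∈ Icc a b) (hv : v ∈ Icc a b) (huv : u ≤ v) :
      |g v - g u| ≤ ∫ z in a..b, |deriv g z| := by
    rw [← intervalIntegral.integral_deriv_eq_sub
      (fun z _ => hg z) (hc.intervalIntegrable _ _)]
    exact (intervalIntegral.abs_integral_le_integral_abs huv).trans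
      (intervalIntegral.integral_mono_interval hu.1 huv hv.2
        (ae_of_all _ fun z => abs_nonneg _) (hc.abs.intervalIntegrable _ _))
  have hxy : |g x - g y| ≤ ∫ z in a..b, |deriv g z| := by
    rcases le_total x y with h | h
    · rw [abs_sub_comm]
      exact hsub hx hy h
    · exact hsub hy hx h
  linarith [abs_sub_abs_le_abs_sub (g x) (g y)]

theorem exists_abs_iteratedDeriv_le_integral_succ (k : ℕ) :
    ∃ C : ℝ, 0 ≤ C ∧ ∀ f : ℝ → ℝ, ContDiff ℝ (k + 1 : ℕ) f → ∀ x ∈ Icc (0 : ℝ) 1,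
      |iteratedDeriv k f x| ≤
        C * (∫ y in (0 : ℝ)..1, |f y|) + ∫ y in (0 : ℝ)..1, |iteratedDeriv (k + 1) f y| := by
  obtain ⟨C, hC, H⟩ := exists_pow_mul_abs_iteratedDeriv_le k
  refine ⟨C, hC, fun f hf x hx => ?_⟩
  obtain ⟨ξ, hξ, h⟩ := H f (hf.of_le (by exact_mod_cast k.le_succ)) 0 1 one_pos
  have hosc := abs_le_abs_add_integral_abs_deriv
    (hf.differentiable_iteratedDeriv k (by exact_mod_cast k.lt_succ_self))
    (by simpa only [iteratedDeriv_succ] using hf.continuous_iteratedDeriv' (k + 1)) hx hξ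
  rw [sub_zero, one_pow, one_mul] at h
  rw [iteratedDeriv_succ]
  linarith

theorem exists_integral_abs_iteratedDeriv_le {k m : ℕ} (hk : k ≤ m) :
    ∃ C : ℝ, 0 ≤ C ∧ ∀ f : ℝ → ℝ, ContDiff ℝ m f →
      ∫ y in (0 : ℝ)..1, |iteratedDeriv k f y| ≤
        C * ((∫ y in (0 : ℝ)..1, |iteratedDeriv m f y|) + ∫ y in (0 : ℝ)..1, |f y|) := by
  have hnonneg (g : ℝ → ℝ) : 0 ≤ ∫ y in (0 : ℝ)..1, |g y| :=
    intervalIntegral.integral_nonneg zero_le_one fun _ _ => abs_nonneg _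
  induction hk using Nat.decreasingInduction with
  | self => exact ⟨1, zero_le_one, fun f _ => by linarith [hnonneg f]⟩
  | of_succ k hk ih =>
    obtain ⟨D, hD, ih⟩ := ih
    obtain ⟨C, hC, H⟩ := exists_abs_iteratedDeriv_le_integral_succ k
    refine ⟨C + D, by positivity, fun f hf => ?_⟩
    have hfk : ContDiff ℝ (k + 1 : ℕ) f := hf.of_le (by exact_mod_cast hk)
    have hc : Continuous (iteratedDeriv k f) :=
      hfk.continuous_iteratedDeriv k (by exact_mod_cast k.le_succ)
    have hmean := intervalIntegral.integral_mono_on (μ := volume) zero_le_one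
      (hc.abs.intervalIntegrable _ _) intervalIntegrable_const (H f hfk)
    rw [intervalIntegral.integral_const, sub_zero, one_smul] at hmean
    nlinarith [ih f hf, mul_nonneg hC (hnonneg (iteratedDeriv m f))]

theorem exists_abs_iteratedDeriv_le_integral {k m : ℕ} (hk : k < m) :
    ∃ C : ℝ, 0 ≤ C ∧ ∀ f : ℝ → ℝ, ContDiff ℝ m f → ∀ x ∈ Icc (0 : ℝ) 1,
      |iteratedDeriv k f x| ≤
        C * ((∫ y in (0 : ℝ)..1, |iteratedDeriv m f y|) + ∫ y in (0 : ℝ)..1, |f y|) := by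
  obtain ⟨C, hC, H⟩ := exists_abs_iteratedDeriv_le_integral_succ k
  obtain ⟨D, hD, K⟩ := exists_integral_abs_iteratedDeriv_le (Nat.succ_le_of_lt hk)
  refine ⟨C + D, by positivity, fun f hf x hx => ?_⟩
  have hnonneg : 0 ≤ ∫ y in (0 : ℝ)..1, |iteratedDeriv m f y| :=
    intervalIntegral.integral_nonneg zero_le_one fun _ _ => abs_nonneg _
  nlinarith [H f (hf.of_le (by exact_mod_cast hk)) x hx, K f hf, mul_nonneg hC hnonneg]

end IntegralBounds

section Superadditivity

/-- Superadditivity of `Φ ^ (1 / e)` for an interval function `Φ a b`. Recording the proportions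
`x`, `y` of the whole that the two parts may take, instead of dividing by `e`, lets `e = 0` stand
for monotonicity, the case of an `L_∞` norm. -/
def IsRpowSuperadditive (e : ℝ) (Φ : ℝ → ℝ → ℝ) : Prop :=
  ∀ ⦃a b c : ℝ⦄, a ≤ b → b ≤ c → ∃ x y : ℝ, 0 ≤ x ∧ 0 ≤ y ∧ x + y ≤ 1 ∧
    Φ a b ≤ x ^ e * Φ a c ∧ Φ b c ≤ y ^ e * Φ a c

theorem rpow_mul_rpow_le_rpow_weighted_mean {x y α β e : ℝ} (hx : 0 ≤ x) (hx1 : x ≤ 1)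
    (hy : 0 ≤ y) (hy1 : y ≤ 1) (hα : 0 ≤ α) (hβ : 0 ≤ β) (he : 0 ≤ e) (hαβ : 0 < α + β)
    (heαβ : e ≤ α + β) :
    x ^ α * y ^ β ≤ (α / (α + β) * x + β / (α + β) * y) ^ e := by
  have hsum : α / (α + β) + β / (α + β) = 1 := by field_simp
  have hmean : α / (α + β) * x + β / (α + β) * y ≤ 1 :=
    calc α / (α + β) * x + β / (α + β) * y ≤ α / (α + β) * 1 + β / (α + β) * 1 := by gcongr
      _ = 1 := by rw [mul_one, mul_one, hsum]
  calc x ^ α * y ^ β = (x ^ (α / (α + β)) * y ^ (β / (α + β))) ^ (α + β) := by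
        rw [mul_rpow (by positivity) (by positivity), ← rpow_mul hx, ← rpow_mul hy,
          div_mul_cancel₀ _ hαβ.ne', div_mul_cancel₀ _ hαβ.ne']
    _ ≤ (α / (α + β) * x + β / (α + β) * y) ^ (α + β) := by
        gcongr
        exact geom_mean_le_arith_mean2_weighted (by positivity) (by positivity) hx hy hsum
    _ ≤ (α / (α + β) * x + β / (α + β) * y) ^ e :=
        rpow_le_rpow_of_exponent_ge' (by positivity) hmean he heαβ

theorem exists_rpow_mul_rpow_le {x x' y y' α β e : ℝ} (hx : 0 ≤ x) (hx' : 0 ≤ x')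
    (hxx' : x + x' ≤ 1) (hy : 0 ≤ y) (hy' : 0 ≤ y') (hyy' : y + y' ≤ 1) (hα : 0 ≤ α) (hβ : 0 ≤ β)
    (he : 0 ≤ e) (heαβ : e ≤ α + β) :
    ∃ z z' : ℝ, 0 ≤ z ∧ 0 ≤ z' ∧ z + z' ≤ 1 ∧ x ^ α * y ^ β ≤ z ^ e ∧ x' ^ α * y' ^ β ≤ z' ^ e := by
  rcases (add_nonneg hα hβ).eq_or_lt with h0 | h0
  · obtain ⟨rfl, rfl, rfl⟩ : α = 0 ∧ β = 0 ∧ e = 0 := by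
      refine ⟨?_, ?_, ?_⟩ <;> linarith
    exact ⟨x, x', hx, hx', hxx', by simp⟩
  · refine ⟨_, _, ?_, ?_, ?_,
      rpow_mul_rpow_le_rpow_weighted_mean hx (by linarith) hy (by linarith) hα hβ he h0 heαβ,
      rpow_mul_rpow_le_rpow_weighted_mean hx' (by linarith) hy' (by linarith) hα hβ he h0 heαβ⟩
    · positivity
    · positivity
    · calc α / (α + β) * x + β / (α + β) * y + (α / (α + β) * x' + β / (α + β) * y')
          = α / (α + β) * (x + x') + β / (α + β) * (y + y') := by ring
        _ ≤ α / (α + β) * 1 + β / (α + β) * 1 := by gcongr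
        _ = 1 := by field_simp

namespace IsRpowSuperadditive

variable {e : ℝ} {Φ : ℝ → ℝ → ℝ}

theorem mono_right (hΦ : IsRpowSuperadditive e Φ) (he : 0 ≤ e) (h0 : ∀ a b, 0 ≤ Φ a b) {a b c : ℝ}
    (hab : a ≤ b) (hbc : b ≤ c) : Φ a b ≤ Φ a c := by
  obtain ⟨x, y, hx, hy, hxy, h, -⟩ := hΦ hab hbc
  exact h.trans (mul_le_of_le_one_left (h0 a c) (rpow_le_one hx (by linarith) he))

theorem const_mul (hΦ : IsRpowSuperadditive e Φ) {D : ℝ} (hD : 0 ≤ D) :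
    IsRpowSuperadditive e fun a b => D * Φ a b := by
  intro a b c hab hbc
  obtain ⟨x, y, hx, hy, hxy, hl, hr⟩ := hΦ hab hbc
  refine ⟨x, y, hx, hy, hxy, ?_, ?_⟩
  · exact (mul_le_mul_of_nonneg_left hl hD).trans_eq (mul_left_comm _ _ _)
  · exact (mul_le_mul_of_nonneg_left hr hD).trans_eq (mul_left_comm _ _ _)

/-- For `e = θ e₁ + η e₂` this is Hölder's inequality for sums of two terms. -/
theorem rpow_mul_rpow {e₁ e₂ θ η : ℝ} {Ψ : ℝ → ℝ → ℝ} (hΦ : IsRpowSuperadditive e₁ Φ)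
    (hΨ : IsRpowSuperadditive e₂ Ψ) (hΦ0 : ∀ a b, 0 ≤ Φ a b) (hΨ0 : ∀ a b, 0 ≤ Ψ a b)
    (he₁ : 0 ≤ e₁) (he₂ : 0 ≤ e₂) (hθ : 0 ≤ θ) (hη : 0 ≤ η) (he : 0 ≤ e)
    (hle : e ≤ θ * e₁ + η * e₂) :
    IsRpowSuperadditive e fun a b => Φ a b ^ θ * Ψ a b ^ η := by
  intro a b c hab hbc
  obtain ⟨x, x', hx, hx', hxx', hΦl, hΦr⟩ := hΦ hab hbc
  obtain ⟨y, y', hy, hy', hyy', hΨl, hΨr⟩ := hΨ hab hbc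
  obtain ⟨z, z', hz, hz', hzz', hl, hr⟩ := exists_rpow_mul_rpow_le hx hx' hxx' hy hy' hyy'
    (mul_nonneg hθ he₁) (mul_nonneg hη he₂) he hle
  have split {u v w φ ψ : ℝ} (hφ0 : 0 ≤ φ) (hψ0 : 0 ≤ ψ) (hu : 0 ≤ u) (hv : 0 ≤ v)
      (hφ : φ ≤ u ^ e₁ * Φ a c) (hψ : ψ ≤ v ^ e₂ * Ψ a c)
      (hw : u ^ (θ * e₁) * v ^ (η * e₂) ≤ w) :
      φ ^ θ * ψ ^ η ≤ w * (Φ a c ^ θ * Ψ a c ^ η) :=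
    have hΦac : 0 ≤ Φ a c ^ θ := rpow_nonneg (hΦ0 a c) θ
    have hΨac : 0 ≤ Ψ a c ^ η := rpow_nonneg (hΨ0 a c) η
    have hΦu : 0 ≤ (u ^ e₁ * Φ a c) ^ θ := rpow_nonneg (hφ0.trans hφ) θ
    calc φ ^ θ * ψ ^ η ≤ (u ^ e₁ * Φ a c) ^ θ * (v ^ e₂ * Ψ a c) ^ η := by gcongr
      _ = u ^ (θ * e₁) * v ^ (η * e₂) * (Φ a c ^ θ * Ψ a c ^ η) := by
          rw [mul_rpow (by positivity) (hΦ0 a c), mul_rpow (by positivity) (hΨ0 a c),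
            ← rpow_mul hu, ← rpow_mul hv, mul_comm e₁, mul_comm e₂]
          ring
      _ ≤ w * (Φ a c ^ θ * Ψ a c ^ η) := by gcongr
  exact ⟨z, z', hz, hz', hzz', split (hΦ0 a b) (hΨ0 a b) hx hy hΦl hΨl hl,
    split (hΦ0 b c) (hΨ0 b c) hx' hy' hΦr hΨr hr⟩

end IsRpowSuperadditive

end Superadditivity

section IntervalLpNorm

/-- The `L_s` norm over `(a, b]`, as a real number; over `(0, 1]` it is `lpNorm s g`. -/
def intervalLpNorm (s : ℝ≥0∞) (g : ℝ → ℝ) (a b : ℝ) : ℝ :=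
  (eLpNorm g s (volume.restrict (Ioc a b))).toReal

variable {s : ℝ≥0∞} {g : ℝ → ℝ} {a b c : ℝ}

theorem intervalLpNorm_nonneg (s : ℝ≥0∞) (g : ℝ → ℝ) (a b : ℝ) : 0 ≤ intervalLpNorm s g a b :=
  ENNReal.toReal_nonneg

theorem intervalLpNorm_eq_lpNorm (hg : Continuous g) (s : ℝ≥0∞) (a b : ℝ) :
    intervalLpNorm s g a b = MeasureTheory.lpNorm g s (volume.restrict (Ioc a b)) :=
  toReal_eLpNorm hg.aestronglyMeasurable

theorem memLp_restrict_Ioc (hg : Continuous g) (s : ℝ≥0∞) (a b : ℝ) :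
    MemLp g s (volume.restrict (Ioc a b)) := by
  obtain ⟨K, hK⟩ := (isCompact_Icc (a := a) (b := b)).exists_bound_of_continuousOn hg.continuousOn
  exact MemLp.of_bound hg.aestronglyMeasurable K
    (ae_restrict_of_forall_mem measurableSet_Ioc fun x hx => hK x (Ioc_subset_Icc_self hx))

theorem intervalLpNorm_rpow (hs : s ≠ 0) (hs' : s ≠ ∞) (hg : Continuous g) (hab : a ≤ b) :
    intervalLpNorm s g a b ^ s.toReal = ∫ x in a..b, |g x| ^ s.toReal := by
  rw [intervalLpNorm_eq_lpNorm hg, lpNorm_eq_integral_norm_rpow_toReal hs hs'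
    hg.aestronglyMeasurable, rpow_inv_rpow (integral_nonneg fun x => by positivity)
    (ENNReal.toReal_pos hs hs').ne', intervalIntegral.integral_of_le hab]
  simp only [norm_eq_abs]

theorem intervalLpNorm_rpow_add (hs : s ≠ 0) (hs' : s ≠ ∞) (hg : Continuous g) (hab : a ≤ b)
    (hbc : b ≤ c) : intervalLpNorm s g a b ^ s.toReal + intervalLpNorm s g b c ^ s.toReal =
      intervalLpNorm s g a c ^ s.toReal := by
  have hc : Continuous fun x => |g x| ^ s.toReal :=
    hg.abs.rpow_const fun _ => Or.inr ENNReal.toReal_nonneg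
  rw [intervalLpNorm_rpow hs hs' hg hab, intervalLpNorm_rpow hs hs' hg hbc,
    intervalLpNorm_rpow hs hs' hg (hab.trans hbc), intervalIntegral.integral_add_adjacent_intervals
    (hc.intervalIntegrable _ _) (hc.intervalIntegrable _ _)]

theorem intervalLpNorm_mono_interval {a' b' : ℝ} (hg : Continuous g) (ha : a' ≤ a) (hb : b ≤ b') :
    intervalLpNorm s g a b ≤ intervalLpNorm s g a' b' :=
  ENNReal.toReal_mono (memLp_restrict_Ioc hg s a' b').eLpNorm_ne_top
    (eLpNorm_mono_measure g (Measure.restrict_mono (Ioc_subset_Ioc ha hb) le_rfl))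

theorem intervalLpNorm_le_of_abs_le {K : ℝ} (hab : a ≤ b) (hK : 0 ≤ K)
    (hgK : ∀ x ∈ Ioc a b, |g x| ≤ K) :
    intervalLpNorm s g a b ≤ (b - a) ^ s.toReal⁻¹ * K := by
  have h : eLpNorm g s (volume.restrict (Ioc a b)) ≤ _ :=
    eLpNorm_le_of_ae_bound (ae_restrict_of_forall_mem measurableSet_Ioc hgK)
  rw [Measure.restrict_apply_univ, Real.volume_Ioc] at h
  replace h := ENNReal.toReal_mono (by finiteness) h
  rwa [ENNReal.toReal_mul, ← ENNReal.toReal_rpow, ENNReal.toReal_ofReal hK,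
    ENNReal.toReal_ofReal (sub_nonneg.2 hab)] at h

theorem isRpowSuperadditive_intervalLpNorm (hs : s ≠ 0) (hg : Continuous g) :
    IsRpowSuperadditive s.toReal⁻¹ (intervalLpNorm s g) := by
  intro a b c hab hbc
  have hl : intervalLpNorm s g a b ≤ intervalLpNorm s g a c :=
    intervalLpNorm_mono_interval hg le_rfl hbc
  have hr : intervalLpNorm s g b c ≤ intervalLpNorm s g a c :=
    intervalLpNorm_mono_interval hg hab le_rfl
  rcases eq_or_ne s ∞ with rfl | hs'
  · exact ⟨1, 0, by simpa using ⟨hl, hr⟩⟩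
  have hpos : 0 < s.toReal := ENNReal.toReal_pos hs hs'
  have hadd := intervalLpNorm_rpow_add hs hs' hg hab hbc
  have hab0 := intervalLpNorm_nonneg s g a b
  have hbc0 := intervalLpNorm_nonneg s g b c
  rcases (intervalLpNorm_nonneg s g a c).eq_or_lt with h0 | h0
  · exact ⟨0, 0, le_rfl, le_rfl, by norm_num, by rwa [← h0, mul_zero, h0],
      by rwa [← h0, mul_zero, h0]⟩
  refine ⟨(intervalLpNorm s g a b / intervalLpNorm s g a c) ^ s.toReal,
    (intervalLpNorm s g b c / intervalLpNorm s g a c) ^ s.toReal,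
    by positivity, by positivity, ?_, ?_, ?_⟩
  · rw [div_rpow hab0 h0.le, div_rpow hbc0 h0.le, ← add_div, hadd, div_self (by positivity)]
  · rw [rpow_rpow_inv (by positivity) hpos.ne', div_mul_cancel₀ _ h0.ne']
  · rw [rpow_rpow_inv (by positivity) hpos.ne', div_mul_cancel₀ _ h0.ne']

theorem ae_abs_le_intervalLpNorm_top (hg : Continuous g) (a b : ℝ) :
    ∀ᵐ x ∂volume.restrict (Ioc a b), |g x| ≤ intervalLpNorm ∞ g a b := by
  rw [intervalLpNorm_eq_lpNorm hg]
  exact ae_le_lpNorm_exponent_top (memLp_restrict_Ioc hg ∞ a b)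

theorem intervalLpNorm_le_of_split {x y K : ℝ} (hs : s ≠ 0) (hg : Continuous g) (hab : a ≤ b)
    (hbc : b ≤ c) (hx : 0 ≤ x) (hy : 0 ≤ y) (hxy : x + y ≤ 1) (hK : 0 ≤ K)
    (hl : intervalLpNorm s g a b ≤ x ^ s.toReal⁻¹ * K)
    (hr : intervalLpNorm s g b c ≤ y ^ s.toReal⁻¹ * K) : intervalLpNorm s g a c ≤ K := by
  rcases eq_or_ne s ∞ with rfl | hs'
  · simp only [ENNReal.toReal_top, inv_zero, rpow_zero, one_mul] at hl hr
    refine ENNReal.toReal_le_of_le_ofReal hK (eLpNormEssSup_le_of_ae_bound ?_)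
    rw [← Ioc_union_Ioc_eq_Ioc hab hbc, ae_restrict_union_iff]
    exact ⟨(ae_abs_le_intervalLpNorm_top hg a b).mono fun _ h => h.trans hl,
      (ae_abs_le_intervalLpNorm_top hg b c).mono fun _ h => h.trans hr⟩
  have hpos : 0 < s.toReal := ENNReal.toReal_pos hs hs'
  have part {u v z : ℝ} (hz : 0 ≤ z) (h : intervalLpNorm s g u v ≤ z ^ s.toReal⁻¹ * K) :
      intervalLpNorm s g u v ^ s.toReal ≤ z * K ^ s.toReal := by
    have := rpow_le_rpow (intervalLpNorm_nonneg s g u v) h hpos.le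
    rwa [mul_rpow (by positivity) hK, rpow_inv_rpow hz hpos.ne'] at this
  refine (rpow_le_rpow_iff (intervalLpNorm_nonneg s g a c) hK hpos).1 ?_
  calc intervalLpNorm s g a c ^ s.toReal
      = intervalLpNorm s g a b ^ s.toReal + intervalLpNorm s g b c ^ s.toReal :=
        (intervalLpNorm_rpow_add hs hs' hg hab hbc).symm
    _ ≤ x * K ^ s.toReal + y * K ^ s.toReal := add_le_add (part hx hl) (part hy hr)
    _ = (x + y) * K ^ s.toReal := by ring
    _ ≤ K ^ s.toReal := mul_le_of_le_one_left (by positivity) hxy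

theorem map_affine_restrict_Ioc (t : ℝ) {l : ℝ} (hl : 0 < l) :
    μ₀.map (fun x => t + l * x) = ENNReal.ofReal l⁻¹ • volume.restrict (Ioc t (t + l)) := by
  have hpre : (fun x => t + l * x) ⁻¹' Ioc t (t + l) = Ioc 0 1 := by
    ext x
    simp [hl]
  have hmap : (volume : Measure ℝ).map (fun x => t + l * x) = ENNReal.ofReal l⁻¹ • volume := by
    have hcomp := Measure.map_map (μ := volume) (measurable_const_add t) (measurable_const_mul l)
    rwa [Real.map_volume_mul_left hl.ne', Measure.map_smul, map_add_left_eq_self,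
      abs_of_pos (inv_pos.2 hl), eq_comm] at hcomp
  rw [μ₀, ← hpre, ← Measure.restrict_map (by fun_prop) measurableSet_Ioc, hmap,
    Measure.restrict_smul]

theorem lpNorm_comp_affine (s : ℝ≥0∞) (hg : Continuous g) (t : ℝ) {l : ℝ} (hl : 0 < l) :
    lpNorm s (fun x => g (t + l * x)) = l ^ (-s.toReal⁻¹) * intervalLpNorm s g t (t + l) := by
  have hmap : lpNorm s (fun x => g (t + l * x)) =
      (eLpNorm g s (μ₀.map fun x => t + l * x)).toReal := by
    rw [eLpNorm_map_measure hg.aestronglyMeasurable (by fun_prop)]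
    rfl
  rw [hmap, map_affine_restrict_Ioc t hl, eLpNorm_smul_measure_of_ne_zero (by simpa using hl),
    smul_eq_mul, ENNReal.toReal_mul, ← ENNReal.toReal_rpow, one_div, ENNReal.toReal_inv,
    ENNReal.toReal_ofReal (inv_nonneg.2 hl.le), inv_rpow hl.le, rpow_neg hl.le]
  rfl

theorem intervalLpNorm_zero_two_le (hs : 1 ≤ s) (hg : Continuous g) (hper : Function.Periodic g 1) :
    intervalLpNorm s g 0 2 ≤ 2 * lpNorm s g := by
  have hinv : s.toReal⁻¹ ≤ 1 := by
    rw [← ENNReal.toReal_inv]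
    exact ENNReal.toReal_mono ENNReal.one_ne_top (ENNReal.inv_le_one.2 hs)
  have h0 : 0 ≤ lpNorm s g := intervalLpNorm_nonneg s g 0 1
  have hle : lpNorm s g ≤ 2⁻¹ ^ s.toReal⁻¹ * (2 * lpNorm s g) :=
    calc lpNorm s g = 2⁻¹ ^ (1 : ℝ) * (2 * lpNorm s g) := by rw [rpow_one]; ring
      _ ≤ 2⁻¹ ^ s.toReal⁻¹ * (2 * lpNorm s g) := by
        gcongr ?_ * _
        exact rpow_le_rpow_of_exponent_ge (by norm_num) (by norm_num) hinv
  have hshift : intervalLpNorm s g 1 2 = lpNorm s g := by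
    have h := lpNorm_comp_affine s hg 1 one_pos
    rw [one_rpow, one_mul, one_add_one_eq_two] at h
    rw [← h]
    congr with x
    rw [one_mul, add_comm, hper]
  exact intervalLpNorm_le_of_split (one_pos.trans_le hs).ne' hg zero_le_one one_le_two
    (by norm_num) (by norm_num) (by norm_num) (by positivity) hle (hshift.trans_le hle)

end IntervalLpNorm

section Covering

theorem exists_mem_Icc_one_two_of_steps {P : ℝ → Prop} {δ : ℝ} (hδ : 0 < δ) (h0 : P 0)
    (hstep : ∀ t ∈ Icc (0 : ℝ) 1, P t → ∃ l ∈ Icc δ 1, P (t + l)) :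
    ∃ T ∈ Icc (1 : ℝ) 2, P T := by
  have reach (n : ℕ) : ∃ T ∈ Icc (min 1 (n * δ)) 2, P T := by
    induction n with
    | zero => exact ⟨0, by simp, h0⟩
    | succ n ih =>
      obtain ⟨T, hT, hPT⟩ := ih
      rcases le_total 1 T with h1 | h1
      · exact ⟨T, ⟨(min_le_left _ _).trans h1, hT.2⟩, hPT⟩
      · have hT0 : 0 ≤ T := (le_min zero_le_one (by positivity)).trans hT.1
        obtain ⟨l, hl, hP⟩ := hstep T ⟨hT0, h1⟩ hPT
        refine ⟨T + l, ⟨?_, by linarith [hl.2]⟩, hP⟩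
        push_cast
        rcases min_le_iff.1 hT.1 with h | h
        · exact (min_le_left _ _).trans (by linarith [hl.1])
        · exact (min_le_right _ _).trans (by linarith [hl.1])
  obtain ⟨n, hn⟩ := exists_nat_ge δ⁻¹
  obtain ⟨T, hT, hPT⟩ := reach n
  rw [min_eq_left (by rwa [← inv_le_iff_one_le_mul₀ hδ])] at hT
  exact ⟨T, hT, hPT⟩

theorem lpNorm_le_of_forall_exists_interval {r : ℝ≥0∞} {u : ℝ → ℝ} {Φ : ℝ → ℝ → ℝ} {δ : ℝ}
    (hr : r ≠ 0) (hu : Continuous u) (hΦ : IsRpowSuperadditive r.toReal⁻¹ Φ)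
    (hΦ0 : ∀ a b, 0 ≤ Φ a b) (hδ : 0 < δ)
    (hloc : ∀ t ∈ Icc (0 : ℝ) 1, ∃ l ∈ Icc δ 1, ∀ x ∈ Ioc t (t + l),
      |u x| ≤ l ^ (-r.toReal⁻¹) * Φ t (t + l)) :
    lpNorm r u ≤ Φ 0 2 := by
  have he : 0 ≤ r.toReal⁻¹ := inv_nonneg.2 ENNReal.toReal_nonneg
  have hstep (t : ℝ) (ht : t ∈ Icc (0 : ℝ) 1) (hPt : intervalLpNorm r u 0 t ≤ Φ 0 t) :
      ∃ l ∈ Icc δ 1, intervalLpNorm r u 0 (t + l) ≤ Φ 0 (t + l) := by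
    obtain ⟨l, hl, hul⟩ := hloc t ht
    have hl0 : 0 < l := hδ.trans_le hl.1
    have hlocal : intervalLpNorm r u t (t + l) ≤ Φ t (t + l) := by
      have := intervalLpNorm_le_of_abs_le (s := r) (by linarith)
        (mul_nonneg (by positivity) (hΦ0 t (t + l))) hul
      rwa [add_sub_cancel_left, ← mul_assoc, ← rpow_add hl0, add_neg_cancel, rpow_zero,
        one_mul] at this
    obtain ⟨x, y, hx, hy, hxy, hleft, hright⟩ := hΦ ht.1 (by linarith : t ≤ t + l)
    exact ⟨l, hl, intervalLpNorm_le_of_split hr hu ht.1 (by linarith) hx hy hxy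
      (hΦ0 _ _) (hPt.trans hleft) (hlocal.trans hright)⟩
  obtain ⟨T, ⟨hT1, hT2⟩, hT⟩ := exists_mem_Icc_one_two_of_steps hδ
    (by simpa [intervalLpNorm] using hΦ0 0 0) hstep
  calc lpNorm r u ≤ intervalLpNorm r u 0 T := intervalLpNorm_mono_interval hu le_rfl hT1
    _ ≤ Φ 0 T := hT
    _ ≤ Φ 0 2 := hΦ.mono_right he hΦ0 (zero_le_one.trans hT1) hT2

end Covering

section UnitIntervalNorms

instance isProbabilityMeasure_μ₀ : IsProbabilityMeasure μ₀ := ⟨by simp [μ₀]⟩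

variable {s : ℝ≥0∞} {g : ℝ → ℝ}

theorem lpNorm_nonneg (s : ℝ≥0∞) (g : ℝ → ℝ) : 0 ≤ lpNorm s g := ENNReal.toReal_nonneg

theorem memLp_μ₀ (hg : Continuous g) (s : ℝ≥0∞) : MemLp g s μ₀ := memLp_restrict_Ioc hg s 0 1

theorem lpNorm_mono_exponent {s' : ℝ≥0∞} (hg : Continuous g) (hss' : s ≤ s') :
    lpNorm s g ≤ lpNorm s' g :=
  ENNReal.toReal_mono (memLp_μ₀ hg s').eLpNorm_ne_top
    (eLpNorm_le_eLpNorm_of_exponent_le hss' hg.aestronglyMeasurable)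

theorem lpNorm_mono {g' : ℝ → ℝ} (hg' : Continuous g') (s : ℝ≥0∞) (h : ∀ x, |g x| ≤ |g' x|) :
    lpNorm s g ≤ lpNorm s g' :=
  ENNReal.toReal_mono (memLp_μ₀ hg' s).eLpNorm_ne_top (eLpNorm_mono h)

theorem lpNorm_le_of_abs_le {K : ℝ} (hK : 0 ≤ K) (h : ∀ x ∈ Ioc (0 : ℝ) 1, |g x| ≤ K) :
    lpNorm s g ≤ K := by
  have := intervalLpNorm_le_of_abs_le (s := s) zero_le_one hK h
  rwa [sub_zero, one_rpow, one_mul] at this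

theorem le_lpNorm_of_le_abs {c : ℝ} (hs : s ≠ 0) (hg : Continuous g) (hc : 0 ≤ c)
    (h : ∀ x, c ≤ |g x|) : c ≤ lpNorm s g :=
  calc c = lpNorm s fun _ => c := by
        simp [lpNorm, eLpNorm_const c hs (NeZero.ne μ₀), abs_of_nonneg hc]
    _ ≤ lpNorm s g := lpNorm_mono hg s fun x => (abs_of_nonneg hc).trans_le (h x)

theorem lpNorm_le_add_of_abs_sub_le {g' : ℝ → ℝ} {K : ℝ} (hs : 1 ≤ s) (hg : Continuous g)
    (hg' : Continuous g') (hK : 0 ≤ K) (h : ∀ x ∈ Ioc (0 : ℝ) 1, |g x - g' x| ≤ K) :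
    lpNorm s g ≤ lpNorm s g' + K := by
  have hle : eLpNorm g s μ₀ ≤ eLpNorm g' s μ₀ + eLpNorm (g - g') s μ₀ := by
    simpa using eLpNorm_add_le hg'.aestronglyMeasurable (hg.sub hg').aestronglyMeasurable hs
  have hg'_top := (memLp_μ₀ hg' s).eLpNorm_ne_top
  have hsub_top := (memLp_μ₀ (hg.sub hg') s).eLpNorm_ne_top
  calc lpNorm s g ≤ lpNorm s g' + lpNorm s (g - g') := by
        simp only [lpNorm]
        rw [← ENNReal.toReal_add hg'_top hsub_top]
        exact ENNReal.toReal_mono (ENNReal.add_ne_top.2 ⟨hg'_top, hsub_top⟩) hle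
    _ ≤ lpNorm s g' + K := by
        gcongr
        exact lpNorm_le_of_abs_le hK h

theorem integral_abs_le_lpNorm (hs : 1 ≤ s) (hg : Continuous g) :
    ∫ x in (0 : ℝ)..1, |g x| ≤ lpNorm s g := by
  have h := intervalLpNorm_rpow one_ne_zero ENNReal.one_ne_top hg zero_le_one
  simp only [ENNReal.toReal_one, rpow_one] at h
  exact h.symm.trans_le (lpNorm_mono_exponent hg hs)

theorem continuous_lpNorm_of_uncurry {X : Type*} [TopologicalSpace X] {G : X → ℝ → ℝ} (hs : 1 ≤ s)
    (hG : Continuous G.uncurry) : Continuous fun l => lpNorm s (G l) := by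
  have hcont (l : X) : Continuous (G l) := hG.uncurry_left l
  refine continuous_iff_continuousAt.2 fun l₀ => Metric.tendsto_nhds.2 fun ε hε => ?_
  obtain ⟨v, hv, hclose⟩ := isCompact_Icc.mem_uniformity_of_prod (k := Icc (0 : ℝ) 1)
    hG.continuousOn (mem_univ l₀) (Metric.dist_mem_uniformity (half_pos hε))
  rw [nhdsWithin_univ] at hv
  filter_upwards [hv] with l hl
  have hclose' (x : ℝ) (hx : x ∈ Ioc (0 : ℝ) 1) : |G l x - G l₀ x| ≤ ε / 2 :=
    (hclose l hl x (Ioc_subset_Icc_self hx)).le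
  have hle := lpNorm_le_add_of_abs_sub_le hs (hcont l) (hcont l₀) (half_pos hε).le hclose'
  have hge := lpNorm_le_add_of_abs_sub_le hs (hcont l₀) (hcont l) (half_pos hε).le
    fun x hx => (abs_sub_comm _ _).trans_le (hclose' x hx)
  rw [Real.dist_eq, abs_lt]
  constructor <;> linarith

theorem continuous_lpNorm_comp_affine (hs : 1 ≤ s) (hg : Continuous g) (t : ℝ) :
    Continuous fun l : ℝ => lpNorm s fun x => g (t + l * x) :=
  continuous_lpNorm_of_uncurry (G := fun l x => g (t + l * x)) hs
    (hg.comp (by fun_prop : Continuous fun z : ℝ × ℝ => t + z.1 * z.2))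

end UnitIntervalNorms

section Balancing

theorem exists_balanced_length {m : ℕ} {p q : ℝ≥0∞} {F G : ℝ → ℝ} {ε S M : ℝ} (hm : m ≠ 0)
    (hp : 1 ≤ p) (hq : 1 ≤ q) (hF : Continuous F) (hG : Continuous G) (hε : 0 < ε)
    (hεF : ∀ x, ε ≤ F x) (hFS : ∀ x, F x ≤ S) (hSG : ∀ x, S ≤ G x) (hGM : ∀ x, G x ≤ M) :
    ∃ δ > 0, ∀ t, ∃ l ∈ Icc δ 1,
      l ^ m * lpNorm p (fun x => G (t + l * x)) = lpNorm q fun x => F (t + l * x) := by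
  have hS : 0 < S := hε.trans_le ((hεF 0).trans (hFS 0))
  have hM : 0 < M := hS.trans_le ((hSG 0).trans (hGM 0))
  have hcont {H : ℝ → ℝ} (hH : Continuous H) (t l : ℝ) : Continuous fun x => H (t + l * x) := by
    fun_prop
  refine ⟨min 1 (ε / M), by positivity, fun t => ?_⟩
  set δ := min 1 (ε / M)
  have hδ : 0 < δ := by positivity
  have hshort : δ ^ m * lpNorm p (fun x => G (t + δ * x)) ≤ lpNorm q fun x => F (t + δ * x) :=
    calc δ ^ m * lpNorm p (fun x => G (t + δ * x)) ≤ δ * M := by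
          gcongr
          · exact lpNorm_nonneg _ _
          · exact pow_le_of_le_one hδ.le (min_le_left _ _) hm
          · exact lpNorm_le_of_abs_le hM.le fun x _ =>
              (abs_of_pos (hS.trans_le (hSG _))).trans_le (hGM _)
      _ ≤ ε := (le_div_iff₀ hM).1 (min_le_right _ _)
      _ ≤ lpNorm q fun x => F (t + δ * x) :=
          le_lpNorm_of_le_abs (one_pos.trans_le hq).ne' (hcont hF t δ) hε.le
            fun x => (hεF _).trans (le_abs_self _)
  have hlong : lpNorm q (fun x => F (t + 1 * x)) ≤ 1 ^ m * lpNorm p fun x => G (t + 1 * x) :=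
    calc lpNorm q (fun x => F (t + 1 * x)) ≤ S :=
          lpNorm_le_of_abs_le hS.le fun x _ =>
            (abs_of_pos (hε.trans_le (hεF _))).trans_le (hFS _)
      _ ≤ 1 ^ m * lpNorm p fun x => G (t + 1 * x) := by
          rw [one_pow, one_mul]
          exact le_lpNorm_of_le_abs (one_pos.trans_le hp).ne' (hcont hG t 1) hS.le
            fun x => (hSG _).trans (le_abs_self _)
  have hδ1 : δ ≤ 1 := min_le_left _ _
  have hleft : Continuous fun l => l ^ m * lpNorm p fun x => G (t + l * x) :=
    (continuous_pow m).mul (continuous_lpNorm_comp_affine hp hG t)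
  exact isPreconnected_Icc.intermediate_value₂ (left_mem_Icc.2 hδ1) (right_mem_Icc.2 hδ1)
    hleft.continuousOn (continuous_lpNorm_comp_affine hq hF t).continuousOn hshort hlong

end Balancing

section LocalEstimate

theorem iteratedDeriv_comp_affine {n : ℕ} {f : ℝ → ℝ} (hf : ContDiff ℝ n f) (t l : ℝ) :
    iteratedDeriv n (fun y => f (t + l * y)) = fun y => l ^ n * iteratedDeriv n f (t + l * y) := by
  have hft : ContDiff ℝ n fun y => f (t + y) := hf.comp (by fun_prop)
  rw [iteratedDeriv_comp_const_mul hft l, iteratedDeriv_comp_const_add]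

theorem exists_pow_mul_abs_iteratedDeriv_le_lpNorm {k m : ℕ} (hk : k < m) {p q : ℝ≥0∞}
    (hp : 1 ≤ p) (hq : 1 ≤ q) :
    ∃ C : ℝ, 0 ≤ C ∧ ∀ f : ℝ → ℝ, ContDiff ℝ m f → ∀ t l : ℝ, 0 < l → ∀ x ∈ Icc t (t + l),
      l ^ k * |iteratedDeriv k f x| ≤
        C * (l ^ m * lpNorm p (fun y => iteratedDeriv m f (t + l * y)) +
          lpNorm q fun y => f (t + l * y)) := by
  obtain ⟨C, hC, H⟩ := exists_abs_iteratedDeriv_le_integral hk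
  refine ⟨C, hC, fun f hf t l hl x hx => ?_⟩
  have hrescaled : ContDiff ℝ m fun y => f (t + l * y) := hf.comp (by fun_prop)
  have hfm : Continuous fun y => iteratedDeriv m f (t + l * y) :=
    (hf.continuous_iteratedDeriv' m).comp (by fun_prop)
  have hunit := H _ hrescaled ((x - t) / l)
    ⟨div_nonneg (by linarith [hx.1]) hl.le, (div_le_one hl).2 (by linarith [hx.2])⟩
  have hfk : ContDiff ℝ k f := hf.of_le (by exact_mod_cast hk.le)
  simp only [iteratedDeriv_comp_affine hfk, iteratedDeriv_comp_affine hf, abs_mul, abs_pow,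
    abs_of_pos hl, mul_div_cancel₀ _ hl.ne', add_sub_cancel,
    intervalIntegral.integral_const_mul] at hunit
  refine hunit.trans ?_
  gcongr
  · exact integral_abs_le_lpNorm hp hfm
  · exact integral_abs_le_lpNorm hq hrescaled.continuous

theorem exists_abs_le_normKP {m : ℕ} (hm : 0 < m) {p : ℝ≥0∞} (hp : 1 ≤ p) :
    ∃ C : ℝ, 0 ≤ C ∧ ∀ f : ℝ → ℝ, Function.Periodic f 1 → ContDiff ℝ m f →
      ∀ x, |f x| ≤ C * normKP m p f := by
  obtain ⟨C, hC, H⟩ := exists_pow_mul_abs_iteratedDeriv_le_lpNorm hm hp hp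
  refine ⟨C, hC, fun f hper hf x => ?_⟩
  have h := H f hf 0 1 one_pos (Int.fract x) ⟨Int.fract_nonneg x, by linarith [Int.fract_lt_one x]⟩
  have hfract : f (Int.fract x) = f x := by
    simpa using hper.sub_int_mul_eq (x := x) ⌊x⌋
  simpa [hfract, normKP] using h

theorem le_rpow_neg_mul_of_balanced {k m : ℕ} {l y A B A' B' C P Q R θ : ℝ} (hl : 0 < l)
    (hl1 : l ≤ 1) (hA' : 0 ≤ A') (hB' : 0 ≤ B') (hC : 0 ≤ C) (hθ0 : 0 ≤ θ) (hθ1 : θ ≤ 1)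
    (hscale : k - R ≤ θ * (m - P) - (1 - θ) * Q) (hA : A = l ^ (-P) * A') (hB : B = l ^ (-Q) * B')
    (hbal : l ^ m * A = B) (hy : l ^ k * y ≤ C * (l ^ m * A + B)) :
    y ≤ l ^ (-R) * (2 * C * (A' ^ θ * B' ^ (1 - θ))) := by
  have hB0 : 0 ≤ B := hB ▸ by positivity
  have hmean : B ≤ l ^ (k - R) * (A' ^ θ * B' ^ (1 - θ)) :=
    calc B = B ^ θ * B ^ (1 - θ) := by
          rw [← rpow_add_of_nonneg hB0 hθ0 (sub_nonneg.2 hθ1), add_sub_cancel, rpow_one]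
      _ = (l ^ ((m : ℝ) - P) * A') ^ θ * (l ^ (-Q) * B') ^ (1 - θ) := by
          nth_rw 1 [← hbal]
          rw [hA, hB, ← mul_assoc, ← rpow_natCast, ← rpow_add hl, ← sub_eq_add_neg]
      _ = l ^ (θ * (m - P) - (1 - θ) * Q) * (A' ^ θ * B' ^ (1 - θ)) := by
          rw [mul_rpow (by positivity) hA', mul_rpow (by positivity) hB', ← rpow_mul hl.le,
            ← rpow_mul hl.le, mul_mul_mul_comm, ← rpow_add hl]
          ring_nf
      _ ≤ l ^ (k - R) * (A' ^ θ * B' ^ (1 - θ)) := by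
          gcongr ?_ * _
          exact rpow_le_rpow_of_exponent_ge hl hl1 hscale
  refine le_of_mul_le_mul_left (hy.trans ?_) (pow_pos hl k)
  calc C * (l ^ m * A + B) = 2 * C * B := by rw [hbal]; ring
    _ ≤ 2 * C * (l ^ (k - R) * (A' ^ θ * B' ^ (1 - θ))) := by gcongr
    _ = l ^ k * (l ^ (-R) * (2 * C * (A' ^ θ * B' ^ (1 - θ)))) := by
        rw [sub_eq_add_neg, rpow_add hl, rpow_natCast]
        ring

end LocalEstimate

section Interpolation

theorem periodic_iteratedDeriv {f : ℝ → ℝ} {c : ℝ} (hf : Function.Periodic f c) (n : ℕ) :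
    Function.Periodic (iteratedDeriv n f) c := fun x => by
  rw [← congrFun (iteratedDeriv_comp_add_const n f c) x]
  simp only [hf _]

theorem exists_balanced_interval_bound {k m : ℕ} (hk : k < m) {p q : ℝ≥0∞} (hp : 1 ≤ p)
    (hq : 1 ≤ q) {R θ : ℝ} (hθ0 : 0 ≤ θ) (hθ1 : θ ≤ 1)
    (hscale : k - R ≤ θ * (m - p.toReal⁻¹) - (1 - θ) * q.toReal⁻¹) :
    ∃ C : ℝ, 0 ≤ C ∧ ∀ f : ℝ → ℝ, Function.Periodic f 1 → ContDiff ℝ m f →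
      ∀ S ε : ℝ, (∀ x, |f x| ≤ S) → 0 < ε → ∃ δ > 0, ∀ t, ∃ l ∈ Icc δ 1, ∀ x ∈ Icc t (t + l),
        |iteratedDeriv k f x| ≤ l ^ (-R) *
          (C * (intervalLpNorm p (fun y => |iteratedDeriv m f y| + (S + ε)) t (t + l) ^ θ *
            intervalLpNorm q (fun y => |f y| + ε) t (t + l) ^ (1 - θ))) := by
  obtain ⟨C, hC, H⟩ := exists_pow_mul_abs_iteratedDeriv_le_lpNorm hk hp hq
  refine ⟨2 * C, by positivity, fun f hper hf S ε hS hε => ?_⟩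
  have hS0 : 0 ≤ S := (abs_nonneg _).trans (hS 0)
  set F : ℝ → ℝ := fun y => |f y| + ε
  set G : ℝ → ℝ := fun y => |iteratedDeriv m f y| + (S + ε)
  have hF : Continuous F := hf.continuous.abs.add_const ε
  have hG : Continuous G := (hf.continuous_iteratedDeriv' m).abs.add_const (S + ε)
  have hGper : Function.Periodic G 1 := fun x => by
    simp only [G, periodic_iteratedDeriv hper m x]
  obtain ⟨M, hM⟩ := (hGper.isBounded_of_continuous one_ne_zero hG).bddAbove
  obtain ⟨δ, hδ, hbal⟩ := exists_balanced_length (Nat.ne_zero_of_lt hk) hp hq hF hG hε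
    (fun x => le_add_of_nonneg_left (abs_nonneg _)) (fun x => add_le_add_left (hS x) ε)
    (fun x => le_add_of_nonneg_left (abs_nonneg _)) fun x => hM (mem_range_self x)
  refine ⟨δ, hδ, fun t => ?_⟩
  obtain ⟨l, hl, hl_bal⟩ := hbal t
  have hl0 : 0 < l := hδ.trans_le hl.1
  refine ⟨l, hl, fun x hx => le_rpow_neg_mul_of_balanced hl0 hl.2 (intervalLpNorm_nonneg _ _ _ _)
    (intervalLpNorm_nonneg _ _ _ _) hC hθ0 hθ1 hscale (lpNorm_comp_affine p hG t hl0)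
    (lpNorm_comp_affine q hF t hl0) hl_bal ((H f hf t l hl0 x hx).trans ?_)⟩
  gcongr ?_ * (_ * ?_ + ?_)
  · exact lpNorm_mono (hG.comp (by fun_prop)) p fun y =>
      (le_add_of_nonneg_right (by positivity)).trans (le_abs_self _)
  · exact lpNorm_mono (hF.comp (by fun_prop)) q fun y =>
      (le_add_of_nonneg_right hε.le).trans (le_abs_self _)

theorem lpNorm_abs_add_le {s : ℝ≥0∞} {g : ℝ → ℝ} {c : ℝ} (hs : 1 ≤ s) (hg : Continuous g)
    (hc : 0 ≤ c) : lpNorm s (fun x => |g x| + c) ≤ lpNorm s g + c :=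
  calc lpNorm s (fun x => |g x| + c) ≤ lpNorm s (fun x => |g x|) + c :=
        lpNorm_le_add_of_abs_sub_le hs (hg.abs.add_const c) hg.abs hc
          fun x _ => by rw [add_sub_cancel_left, abs_of_nonneg hc]
    _ ≤ lpNorm s g + c := by
        gcongr
        exact lpNorm_mono hg s fun x => (abs_abs _).le

theorem intervalLpNorm_abs_add_zero_two_le {s : ℝ≥0∞} {g : ℝ → ℝ} {c : ℝ} (hs : 1 ≤ s)
    (hg : Continuous g) (hper : Function.Periodic g 1) (hc : 0 ≤ c) :
    intervalLpNorm s (fun y => |g y| + c) 0 2 ≤ 2 * (lpNorm s g + c) :=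
  (intervalLpNorm_zero_two_le hs (hg.abs.add_const c) fun x => by simp only [hper x]).trans
    (by gcongr; exact lpNorm_abs_add_le hs hg hc)

theorem exists_lpNorm_iteratedDeriv_le_intervalLpNorm {k m : ℕ} (hk : k < m) {p q r : ℝ≥0∞}
    (hp : 1 ≤ p) (hq : 1 ≤ q) (hr : r ≠ 0) {θ : ℝ} (hθ0 : 0 ≤ θ) (hθ1 : θ ≤ 1)
    (hscale : k - r.toReal⁻¹ ≤ θ * (m - p.toReal⁻¹) - (1 - θ) * q.toReal⁻¹)
    (hsum : r.toReal⁻¹ ≤ θ * p.toReal⁻¹ + (1 - θ) * q.toReal⁻¹) :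
    ∃ C : ℝ, 0 ≤ C ∧ ∀ f : ℝ → ℝ, Function.Periodic f 1 → ContDiff ℝ m f →
      ∀ S ε : ℝ, (∀ x, |f x| ≤ S) → 0 < ε → lpNorm r (iteratedDeriv k f) ≤
        C * (intervalLpNorm p (fun y => |iteratedDeriv m f y| + (S + ε)) 0 2 ^ θ *
          intervalLpNorm q (fun y => |f y| + ε) 0 2 ^ (1 - θ)) := by
  obtain ⟨C, hC, H⟩ := exists_balanced_interval_bound hk hp hq hθ0 hθ1 hscale
  refine ⟨C, hC, fun f hper hf S ε hS hε => ?_⟩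
  have hinv (s : ℝ≥0∞) : 0 ≤ s.toReal⁻¹ := inv_nonneg.2 ENNReal.toReal_nonneg
  obtain ⟨δ, hδ, hloc⟩ := H f hper hf S ε hS hε
  set F : ℝ → ℝ := fun y => |f y| + ε
  set G : ℝ → ℝ := fun y => |iteratedDeriv m f y| + (S + ε)
  have hF : Continuous F := hf.continuous.abs.add_const ε
  have hG : Continuous G := (hf.continuous_iteratedDeriv' m).abs.add_const (S + ε)
  have hΦ : IsRpowSuperadditive r.toReal⁻¹ fun a b =>
      C * (intervalLpNorm p G a b ^ θ * intervalLpNorm q F a b ^ (1 - θ)) :=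
    ((isRpowSuperadditive_intervalLpNorm (one_pos.trans_le hp).ne' hG).rpow_mul_rpow
      (isRpowSuperadditive_intervalLpNorm (one_pos.trans_le hq).ne' hF)
      (intervalLpNorm_nonneg p G) (intervalLpNorm_nonneg q F) (hinv p) (hinv q) hθ0
      (sub_nonneg.2 hθ1) (hinv r) hsum).const_mul hC
  have hΦ0 (a b : ℝ) : 0 ≤ C * (intervalLpNorm p G a b ^ θ * intervalLpNorm q F a b ^ (1 - θ)) :=
    mul_nonneg hC (mul_nonneg (rpow_nonneg (intervalLpNorm_nonneg _ _ _ _) _)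
      (rpow_nonneg (intervalLpNorm_nonneg _ _ _ _) _))
  refine lpNorm_le_of_forall_exists_interval hr
    (hf.continuous_iteratedDeriv k (by exact_mod_cast hk.le)) hΦ hΦ0 hδ fun t _ => ?_
  obtain ⟨l, hl, hlx⟩ := hloc t
  exact ⟨l, hl, fun x hx => hlx x (Ioc_subset_Icc_self hx)⟩

theorem mul_rpow_mul_mul_rpow_one_sub {a b c : ℝ} (ha : 0 ≤ a) (hb : 0 ≤ b) (hc : 0 < c) (θ : ℝ) :
    (c * a) ^ θ * (c * b) ^ (1 - θ) = c * (a ^ θ * b ^ (1 - θ)) := by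
  rw [mul_rpow hc.le ha, mul_rpow hc.le hb, mul_mul_mul_comm, ← rpow_add hc, add_sub_cancel,
    rpow_one]

theorem exists_lpNorm_iteratedDeriv_le_add {k m : ℕ} (hk : k < m) {p q r : ℝ≥0∞} (hp : 1 ≤ p)
    (hq : 1 ≤ q) (hr : r ≠ 0) {θ : ℝ} (hθ0 : 0 ≤ θ) (hθ1 : θ ≤ 1)
    (hscale : k - r.toReal⁻¹ ≤ θ * (m - p.toReal⁻¹) - (1 - θ) * q.toReal⁻¹)
    (hsum : r.toReal⁻¹ ≤ θ * p.toReal⁻¹ + (1 - θ) * q.toReal⁻¹) :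
    ∃ C : ℝ, 0 ≤ C ∧ ∀ f : ℝ → ℝ, Function.Periodic f 1 → ContDiff ℝ m f →
      ∀ S : ℝ, (∀ x, |f x| ≤ S) → lpNorm r (iteratedDeriv k f) ≤
        C * ((lpNorm p (iteratedDeriv m f) + S) ^ θ * lpNorm q f ^ (1 - θ)) := by
  obtain ⟨C, hC, H⟩ := exists_lpNorm_iteratedDeriv_le_intervalLpNorm hk hp hq hr hθ0 hθ1 hscale hsum
  refine ⟨C * 2, by positivity, fun f hper hf S hS => ?_⟩
  have hθ1' : 0 ≤ 1 - θ := sub_nonneg.2 hθ1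
  have hS0 : 0 ≤ S := (abs_nonneg _).trans (hS 0)
  have hp0 := lpNorm_nonneg p (iteratedDeriv m f)
  have hq0 := lpNorm_nonneg q f
  have hε_bound (ε : ℝ) (hε : 0 < ε) : lpNorm r (iteratedDeriv k f) ≤
      C * 2 * ((lpNorm p (iteratedDeriv m f) + (S + ε)) ^ θ * (lpNorm q f + ε) ^ (1 - θ)) := by
    have hG := intervalLpNorm_abs_add_zero_two_le hp (hf.continuous_iteratedDeriv' m)
      (periodic_iteratedDeriv hper m) (add_nonneg hS0 hε.le)
    have hF := intervalLpNorm_abs_add_zero_two_le hq hf.continuous hper hε.le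
    rw [mul_assoc, ← mul_rpow_mul_mul_rpow_one_sub (by positivity) (by positivity) two_pos]
    refine (H f hper hf S ε hS hε).trans ?_
    gcongr <;> apply_rules [rpow_nonneg, intervalLpNorm_nonneg]
  have hcont : Continuous fun ε : ℝ =>
      C * 2 * ((lpNorm p (iteratedDeriv m f) + (S + ε)) ^ θ * (lpNorm q f + ε) ^ (1 - θ)) := by
    fun_prop (disch := assumption)
  have hlim := (hcont.tendsto 0).mono_left (nhdsWithin_le_nhds (s := Ioi 0))
  rw [add_zero, add_zero] at hlim
  exact ge_of_tendsto hlim (eventually_mem_nhdsWithin.mono hε_bound)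

end Interpolation

section GagliardoNirenberg

theorem exists_lpNorm_iteratedDeriv_le_of_inv_le {k m : ℕ} (hk : k < m) {p q r : ℝ≥0∞}
    (hp : 1 ≤ p) (hq : 1 ≤ q) (hr : r ≠ 0) {θ : ℝ} (hθ0 : 0 ≤ θ) (hθ1 : θ ≤ 1)
    (hscale : k - r.toReal⁻¹ ≤ θ * (m - p.toReal⁻¹) - (1 - θ) * q.toReal⁻¹)
    (hsum : r.toReal⁻¹ ≤ θ * p.toReal⁻¹ + (1 - θ) * q.toReal⁻¹) :
    ∃ C : ℝ, 0 ≤ C ∧ ∀ f : ℝ → ℝ, Function.Periodic f 1 → ContDiff ℝ m f →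
      lpNorm r (iteratedDeriv k f) ≤ C * (normKP m p f ^ θ * lpNorm q f ^ (1 - θ)) := by
  obtain ⟨C, hC, hinterp⟩ := exists_lpNorm_iteratedDeriv_le_add hk hp hq hr hθ0 hθ1 hscale hsum
  obtain ⟨K, hK, hsup⟩ := exists_abs_le_normKP (Nat.zero_lt_of_lt hk) hp
  refine ⟨C * (1 + K) ^ θ, by positivity, fun f hper hf => ?_⟩
  have hp0 := lpNorm_nonneg p (iteratedDeriv m f)
  have hN : 0 ≤ normKP m p f := add_nonneg hp0 (lpNorm_nonneg p f)
  have hq0 := lpNorm_nonneg q f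
  calc lpNorm r (iteratedDeriv k f)
      ≤ C * ((lpNorm p (iteratedDeriv m f) + K * normKP m p f) ^ θ * lpNorm q f ^ (1 - θ)) :=
        hinterp f hper hf _ (hsup f hper hf)
    _ ≤ C * (((1 + K) * normKP m p f) ^ θ * lpNorm q f ^ (1 - θ)) := by
        gcongr
        rw [one_add_mul]
        gcongr
        exact le_add_of_nonneg_right (lpNorm_nonneg p f)
    _ = C * (1 + K) ^ θ * (normKP m p f ^ θ * lpNorm q f ^ (1 - θ)) := by
        rw [mul_rpow (by positivity) hN]
        ring

theorem exists_lpNorm_iteratedDeriv_le {k m : ℕ} (hk : k < m) {p q r : ℝ≥0∞}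
    (hp : 1 ≤ p) (hq : 1 ≤ q) (hr : r ≠ 0) {θ : ℝ} (hkθ : k ≤ θ * m) (hθ1 : θ ≤ 1)
    (hscale : k - r.toReal⁻¹ ≤ θ * (m - p.toReal⁻¹) - (1 - θ) * q.toReal⁻¹) :
    ∃ C : ℝ, 0 ≤ C ∧ ∀ f : ℝ → ℝ, Function.Periodic f 1 → ContDiff ℝ m f →
      lpNorm r (iteratedDeriv k f) ≤ C * (normKP m p f ^ θ * lpNorm q f ^ (1 - θ)) := by
  have hm0 : (0 : ℝ) < m := by exact_mod_cast Nat.zero_lt_of_lt hk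
  have hθ0 : 0 ≤ θ := nonneg_of_mul_nonneg_left (k.cast_nonneg.trans hkθ) hm0
  rcases le_total r.toReal⁻¹ (θ * p.toReal⁻¹ + (1 - θ) * q.toReal⁻¹) with hsum | hsum
  · exact exists_lpNorm_iteratedDeriv_le_of_inv_le hk hp hq hr hθ0 hθ1 hscale hsum
  -- Hölder's exponent `r'`, `1/r' = e`, is at least `r`, so `|·|_r ≤ |·|_{r'}` on the circle; the
  -- scaling condition for `r'` reads `k ≤ θ m`.
  set e : ℝ := θ * p.toReal⁻¹ + (1 - θ) * q.toReal⁻¹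
  have he : 0 ≤ e := add_nonneg (mul_nonneg hθ0 (by positivity))
    (mul_nonneg (sub_nonneg.2 hθ1) (by positivity))
  have hr' : (ENNReal.ofReal e)⁻¹.toReal⁻¹ = e := by
    rw [ENNReal.toReal_inv, inv_inv, ENNReal.toReal_ofReal he]
  have hrr' : r ≤ (ENNReal.ofReal e)⁻¹ := by
    rw [ENNReal.le_inv_iff_le_inv, ENNReal.ofReal_le_iff_le_toReal (ENNReal.inv_ne_top.2 hr),
      ENNReal.toReal_inv]
    exact hsum
  obtain ⟨C, hC, H⟩ := exists_lpNorm_iteratedDeriv_le_of_inv_le hk hp hq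
    (ENNReal.inv_ne_zero.2 ENNReal.ofReal_ne_top) hθ0 hθ1 (by rw [hr']; linarith) hr'.le
  exact ⟨C, hC, fun f hper hf => (lpNorm_mono_exponent
    (hf.continuous_iteratedDeriv k (by exact_mod_cast hk.le)) hrr').trans (H f hper hf)⟩

theorem gagliardo_nirenberg_a_general {β m : ℕ} (hβ : β < m) {p q r : ℝ≥0∞} (hp : 1 ≤ p)
    (hq : 1 ≤ q) (hr : r ≠ 0) {θ : ℝ} (hβθ : β ≤ θ * m) (hθ1 : θ ≤ 1)
    (hscale : β - r.toReal⁻¹ ≤ θ * (m - p.toReal⁻¹) - (1 - θ) * q.toReal⁻¹) :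
    ∃ C > 0, ∀ h : ℝ → ℝ, Function.Periodic h 1 → ContDiff ℝ m h →
      normKP β r h ≤ C * normKP m p h ^ θ * lpNorm q h ^ (1 - θ) := by
  have hβ0 : (0 : ℝ) ≤ β := β.cast_nonneg
  obtain ⟨C₁, hC₁, hderiv⟩ := exists_lpNorm_iteratedDeriv_le hβ hp hq hr hβθ hθ1 hscale
  obtain ⟨C₀, hC₀, hzero⟩ := exists_lpNorm_iteratedDeriv_le (k := 0) (Nat.zero_lt_of_lt hβ) hp hq hr
    (by simpa using hβ0.trans hβθ) hθ1 (by push_cast; linarith)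
  refine ⟨C₁ + C₀ + 1, by positivity, fun h hper hh => ?_⟩
  have hprod : 0 ≤ normKP m p h ^ θ * lpNorm q h ^ (1 - θ) :=
    mul_nonneg (rpow_nonneg (add_nonneg (lpNorm_nonneg _ _) (lpNorm_nonneg _ _)) _)
      (rpow_nonneg (lpNorm_nonneg _ _) _)
  have h0 := hzero h hper hh
  rw [iteratedDeriv_zero] at h0
  rw [normKP, mul_assoc]
  linarith [hderiv h hper hh]

end GagliardoNirenberg

/-- **Gagliardo–Nirenberg inequality on the circle, part a).**
Let `m ∈ ℕ`, `β ∈ ℕ₀` with `β ≤ m−1`, let `q, r ∈ [1,∞]` and `p ∈ (1,∞)`.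
If `θ`, determined by `β − 1/r = θ(m − 1/p) − (1−θ)/q`, satisfies `θ ∈ [β/m, 1)`,
then there is `C = C(β,p,q,r,m) > 0` such that every `C^m` function `h` on `S¹`
satisfies `|h|_{β,r} ≤ C |h|_{m,p}^θ |h|_q^{1−θ}`. -/
theorem gagliardo_nirenberg_a
    (m : ℕ) (hm : 1 ≤ m) (β : ℕ) (hβ : β ≤ m - 1)
    (q r : ℝ≥0∞) (hq : 1 ≤ q) (hr : 1 ≤ r)
    (p : ℝ) (hp : 1 < p)
    (θ : ℝ)
    (hθeq : (β : ℝ) - (1 / r).toReal = θ * ((m : ℝ) - 1 / p) - (1 - θ) * (1 / q).toReal)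
    (hθlo : (β : ℝ) / (m : ℝ) ≤ θ) (hθhi : θ < 1) :
    ∃ C > 0, ∀ h : ℝ → ℝ, Function.Periodic h 1 → ContDiff ℝ (m : ℕ∞) h →
      normKP β r h ≤ C * (normKP m (ENNReal.ofReal p) h) ^ θ * (lpNorm q h) ^ (1 - θ) := by
  have hscale : β - r.toReal⁻¹ ≤
      θ * (m - (ENNReal.ofReal p).toReal⁻¹) - (1 - θ) * q.toReal⁻¹ := by
    simpa [ENNReal.toReal_ofReal (one_pos.trans hp).le] using hθeq.le
  exact_mod_cast gagliardo_nirenberg_a_general (by omega) (ENNReal.one_le_ofReal.2 hp.le) hq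
    (one_pos.trans_le hr).ne' ((div_le_iff₀ (by exact_mod_cast hm)).1 hθlo) hθhi.le hscale

end BurgersTurb
end
end

section
/- Let m ∈ ℕ, β ∈ ℕ₀ with β ≤ m−1, let q, r ∈ [1,∞] (with the convention 1/∞ = 0), and let p = 1 or p = ∞. Suppose θ = β/m and the relation β − 1/r = θ(m − 1/p) − (1−θ)(1/q) holds. Then there exists a constant C = C(β,p,q,r,m) > 0 such that every function h of class C^m on the circle S¹ = ℝ/ℤ satisfies |h|_{β,r} ≤ C · |h|_{m,p}^θ · |h|_q^{1−θ}. -/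
open MeasureTheory Real Set Filter
open scoped ENNReal Topology

noncomputable section

namespace BurgersTurb

/-! The heart of the matter is the second-order inequality `|u'|_r² ≤ C |u|_q |u''|_p` for
`2 / r = 1 / p + 1 / q`. With `v = u'`, the direct identity `∫ |v|^r = -(r - 1) ∫ u |v|^(r - 2) v'`
has a singular weight when `r < 2`, so `u` is truncated smoothly at the height `K |v|^α`, turning
the weight into `K |v|^γ` with `γ = r - 2 + α ≥ 0`: integrate over a period the derivative of
`v |v|^γ arctan (u / (K |v|^α))`. Where `|u| ≤ K |v|^α` one of its terms controls `|v|^r / K`, the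
others being `O(|v|^γ |v'|)`; where `|u| ≥ K |v|^α` and `α = r / q`, `|v|^r` is at most `|u / K|^q`.
Choosing `K` so that the latter integrates to at most half of `|v|_r^r`, and applying Hölder to
`|v|^γ |v'|`, gives the inequality; the weight `|v|` is regularized to `√(v² + ε²)` for
differentiability. For `p = q = ∞` it is Landau's inequality.

Consequently `j ↦ |∂^j h|`, taken in the exponents whose reciprocals interpolate affinely between
`1 / q` at `j = 0` and `1 / p` at `j = m`, is log-convex up to a constant, which bounds `|∂^β h|_r`.
The lower-order term `|h|_r` is handled by Hölder interpolation.
-/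

instance : IsProbabilityMeasure μ₀ := ⟨by simp [μ₀]⟩

lemma memLp_of_continuous {f : ℝ → ℝ} (hf : Continuous f) (p : ℝ≥0∞) : MemLp f p μ₀ := by
  obtain ⟨C, hC⟩ := (isCompact_Icc (a := (0 : ℝ)) (b := 1)).exists_bound_of_continuousOn
    hf.continuousOn
  exact .of_bound hf.aestronglyMeasurable C <| (ae_restrict_iff' measurableSet_Ioc).2 <|
    .of_forall fun x hx => hC x (Ioc_subset_Icc_self hx)

lemma lpNorm_eq_measureTheory_lpNorm {f : ℝ → ℝ} (hf : Continuous f) (p : ℝ≥0∞) :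
    lpNorm p f = MeasureTheory.lpNorm f p μ₀ :=
  toReal_eLpNorm hf.aestronglyMeasurable

/-- The norm of `L_{1/a}(S¹)`, with `a = 0` standing for `L_∞`. Parametrizing by the reciprocal of
the exponent makes Hölder's inequality and interpolation linear in the parameter and removes the
case distinction at `∞`. -/
def recipLpNorm (a : ℝ) (f : ℝ → ℝ) : ℝ := lpNorm (ENNReal.ofReal a)⁻¹ f

lemma lpNorm_eq_recipLpNorm {p : ℝ≥0∞} (hp : p ≠ 0) (f : ℝ → ℝ) :
    lpNorm p f = recipLpNorm (1 / p).toReal f := by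
  rw [recipLpNorm, one_div, ENNReal.ofReal_toReal (ENNReal.inv_ne_top.2 hp), inv_inv]

lemma recipLpNorm_nonneg (a : ℝ) (f : ℝ → ℝ) : 0 ≤ recipLpNorm a f := ENNReal.toReal_nonneg

lemma recipLpNorm_one {f : ℝ → ℝ} (hf : Continuous f) :
    recipLpNorm 1 f = ∫ x in (0 : ℝ)..1, |f x| := by
  rw [recipLpNorm, ENNReal.ofReal_one, inv_one, lpNorm_eq_measureTheory_lpNorm hf,
    lpNorm_one_eq_integral_norm hf.aestronglyMeasurable,
    intervalIntegral.integral_of_le zero_le_one]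
  rfl

lemma eq_of_ae_eq_of_periodic {f g : ℝ → ℝ} (hf : Continuous f) (hg : Continuous g)
    (hfp : Function.Periodic f 1) (hgp : Function.Periodic g 1) (h : f =ᵐ[μ₀] g) : f = g := by
  have hfg : EqOn f g (Ioc 0 1) :=
    Measure.eqOn_Ioc_of_ae_eq volume h hf.continuousOn hg.continuousOn
  ext x
  have hpair : Function.Periodic (fun x => (f x, g x)) 1 := fun x => Prod.ext (hfp x) (hgp x)
  obtain ⟨y, hy, hxy⟩ := hpair.exists_mem_Ioc one_pos x 0
  rw [zero_add] at hy
  obtain ⟨hfy, hgy⟩ := Prod.mk_inj.1 hxy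
  rw [hfy, hgy, hfg hy]

lemma recipLpNorm_mul_le {f g : ℝ → ℝ} (hf : Continuous f) (hg : Continuous g) {s t : ℝ}
    (hs : 0 ≤ s) (ht : 0 ≤ t) :
    recipLpNorm (s + t) (fun x => f x * g x) ≤ recipLpNorm s f * recipLpNorm t g := by
  have : ENNReal.HolderTriple (ENNReal.ofReal s)⁻¹ (ENNReal.ofReal t)⁻¹
      (ENNReal.ofReal (s + t))⁻¹ := ⟨by simp only [inv_inv, ENNReal.ofReal_add hs ht]⟩
  have hHolder := eLpNorm_smul_le_mul_eLpNorm (μ := μ₀) (r := (ENNReal.ofReal (s + t))⁻¹)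
    (p := (ENNReal.ofReal s)⁻¹) (q := (ENNReal.ofReal t)⁻¹)
    hg.aestronglyMeasurable hf.aestronglyMeasurable
  rw [recipLpNorm, recipLpNorm, recipLpNorm, lpNorm, lpNorm, lpNorm, ← ENNReal.toReal_mul]
  exact ENNReal.toReal_mono (ENNReal.mul_ne_top (memLp_of_continuous hf _).eLpNorm_ne_top
    (memLp_of_continuous hg _).eLpNorm_ne_top) hHolder

lemma recipLpNorm_abs_rpow (a : ℝ) (f : ℝ → ℝ) {t : ℝ} (ht : 0 ≤ t) :
    recipLpNorm (t * a) (fun x => |f x| ^ t) = recipLpNorm a f ^ t := by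
  rcases ht.eq_or_lt with rfl | ht
  · have hconst : eLpNorm (fun _ : ℝ => (1 : ℝ)) ⊤ μ₀ = 1 := by
      rw [eLpNorm_const _ ENNReal.top_ne_zero (IsProbabilityMeasure.ne_zero μ₀)]
      simp
    simp only [recipLpNorm, lpNorm, zero_mul, ENNReal.ofReal_zero, ENNReal.inv_zero, rpow_zero,
      hconst, ENNReal.toReal_one]
  · have ht' : ENNReal.ofReal t ≠ 0 := (ENNReal.ofReal_pos.2 ht).ne'
    have hexp : (ENNReal.ofReal (t * a))⁻¹ * ENNReal.ofReal t = (ENNReal.ofReal a)⁻¹ := by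
      rw [ENNReal.ofReal_mul ht.le, ENNReal.mul_inv (.inl ht') (.inl ENNReal.ofReal_ne_top),
        mul_right_comm, ENNReal.inv_mul_cancel ht' ENNReal.ofReal_ne_top, one_mul]
    rw [recipLpNorm, recipLpNorm, lpNorm, lpNorm, ENNReal.toReal_rpow, ← hexp,
      ← eLpNorm_norm_rpow f ht]
    rfl

lemma recipLpNorm_abs (a : ℝ) (f : ℝ → ℝ) : recipLpNorm a (fun x => |f x|) = recipLpNorm a f :=
  congrArg ENNReal.toReal (eLpNorm_norm f)

lemma integral_abs_rpow_inv {f : ℝ → ℝ} (hf : Continuous f) {a : ℝ} (ha : 0 < a) :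
    ∫ x in (0 : ℝ)..1, |f x| ^ a⁻¹ = recipLpNorm a f ^ a⁻¹ := by
  have hcont : Continuous fun x => |f x| ^ a⁻¹ :=
    hf.abs.rpow_const fun _ => .inr (by positivity)
  rw [← recipLpNorm_abs_rpow a f (by positivity : 0 ≤ a⁻¹), inv_mul_cancel₀ ha.ne',
    recipLpNorm_one hcont]
  simp only [abs_rpow_of_nonneg (abs_nonneg _), abs_abs]

lemma recipLpNorm_convex_combination_le {f : ℝ → ℝ} (hf : Continuous f) {a b θ : ℝ} (ha : 0 ≤ a)
    (hb : 0 ≤ b) (hθ₀ : 0 ≤ θ) (hθ₁ : θ ≤ 1) :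
    recipLpNorm (θ * a + (1 - θ) * b) f ≤ recipLpNorm a f ^ θ * recipLpNorm b f ^ (1 - θ) := by
  have hθ' : 0 ≤ 1 - θ := sub_nonneg.2 hθ₁
  have hsplit : (fun x => |f x|) = fun x => |f x| ^ θ * |f x| ^ (1 - θ) := by
    ext x
    rw [← rpow_add_of_nonneg (abs_nonneg _) hθ₀ hθ', add_sub_cancel, rpow_one]
  rw [← recipLpNorm_abs_rpow a f hθ₀, ← recipLpNorm_abs_rpow b f hθ', ← recipLpNorm_abs _ f,
    hsplit]
  exact recipLpNorm_mul_le (hf.abs.rpow_const fun _ => .inr hθ₀)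
    (hf.abs.rpow_const fun _ => .inr hθ') (by positivity) (by positivity)

lemma abs_le_recipLpNorm_zero {f : ℝ → ℝ} (hf : Continuous f) (hper : Function.Periodic f 1)
    (x : ℝ) : |f x| ≤ recipLpNorm 0 f := by
  have hae : (fun y => min |f y| (recipLpNorm 0 f)) =ᵐ[μ₀] fun y => |f y| := by
    filter_upwards [ae_le_lpNorm_exponent_top (memLp_of_continuous hf ⊤)] with y hy
    rw [← lpNorm_eq_measureTheory_lpNorm hf] at hy
    exact min_eq_left (by simpa [recipLpNorm] using hy)
  have := eq_of_ae_eq_of_periodic (hf.abs.min continuous_const) hf.abs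
    (hper.comp fun t => min |t| (recipLpNorm 0 f)) (hper.comp abs) hae
  exact min_eq_left_iff.1 (congrFun this x)

lemma recipLpNorm_zero_le {f : ℝ → ℝ} {M : ℝ} (hM : ∀ x, |f x| ≤ M) : recipLpNorm 0 f ≤ M := by
  rw [recipLpNorm, ENNReal.ofReal_zero, ENNReal.inv_zero, lpNorm, eLpNorm_exponent_top]
  exact ENNReal.toReal_le_of_le_ofReal ((abs_nonneg _).trans (hM 0))
    (eLpNormEssSup_le_of_ae_bound (.of_forall hM))

lemma eq_zero_of_recipLpNorm_eq_zero {f : ℝ → ℝ} (hf : Continuous f)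
    (hper : Function.Periodic f 1) {a : ℝ} (h : recipLpNorm a f = 0) : f = 0 := by
  rw [recipLpNorm, lpNorm_eq_measureTheory_lpNorm hf,
    lpNorm_eq_zero (memLp_of_continuous hf _) (by simp)] at h
  exact eq_of_ae_eq_of_periodic hf continuous_zero hper (fun _ => rfl) h

lemma hasDerivAt_mul_rpow_mul_arctan {u v w : ℝ → ℝ} {u' v' w' x : ℝ} (hu : HasDerivAt u u' x)
    (hv : HasDerivAt v v' x) (hw : HasDerivAt w w' x) (hw₀ : 0 < w x) (α γ : ℝ) :
    HasDerivAt (fun y => v y * w y ^ γ * arctan (u y * w y ^ (-α)))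
      (w x ^ γ * (v' * arctan (u x * w x ^ (-α)) + v x / w x * w' *
          (γ * arctan (u x * w x ^ (-α)) -
            α * (u x * w x ^ (-α) / (1 + (u x * w x ^ (-α)) ^ 2)))) +
        v x * u' * w x ^ (γ - α) / (1 + (u x * w x ^ (-α)) ^ 2)) x := by
  have hs := (hu.mul (hw.rpow_const (p := -α) (.inl hw₀.ne'))).arctan
  refine ((hv.mul (hw.rpow_const (p := γ) (.inl hw₀.ne'))).mul hs).congr_deriv ?_
  simp only [Pi.mul_apply]
  rw [rpow_sub_one hw₀.ne', rpow_sub_one hw₀.ne', sub_eq_add_neg γ α, rpow_add hw₀]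
  have : 1 + (u x * w x ^ (-α)) ^ 2 ≠ 0 := by positivity
  field_simp
  ring

lemma abs_arctan_le_two (s : ℝ) : |arctan s| ≤ 2 := by
  rw [abs_le]
  constructor <;> linarith [arctan_lt_pi_div_two s, neg_pi_div_two_lt_arctan s, pi_le_four]

lemma abs_div_one_add_sq_le_one (s : ℝ) : |s / (1 + s ^ 2)| ≤ 1 := by
  rw [abs_div, abs_of_pos (by positivity : 0 < 1 + s ^ 2), div_le_one (by positivity), ← sq_abs]
  nlinarith [sq_nonneg (|s| - 1)]

lemma abs_arctan_combination_le {v v' w w' α γ : ℝ} (s : ℝ) (hvw : |v| ≤ w) (hw' : |w'| ≤ |v'|)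
    (hα : 0 ≤ α) (hγ : 0 ≤ γ) :
    |v' * arctan s + v / w * w' * (γ * arctan s - α * (s / (1 + s ^ 2)))| ≤
      2 * (1 + γ + α) * |v'| := by
  have hratio : |v / w * w'| ≤ |v'| := by
    rw [abs_mul, abs_div, abs_of_nonneg ((abs_nonneg v).trans hvw)]
    exact (mul_le_of_le_one_left (abs_nonneg _)
      (div_le_one_of_le₀ hvw ((abs_nonneg v).trans hvw))).trans hw'
  have hbracket : |γ * arctan s - α * (s / (1 + s ^ 2))| ≤ γ * 2 + α * 1 := by
    refine (abs_sub _ _).trans ?_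
    rw [abs_mul, abs_mul, abs_of_nonneg hγ, abs_of_nonneg hα]
    gcongr
    exacts [abs_arctan_le_two s, abs_div_one_add_sq_le_one s]
  calc |v' * arctan s + v / w * w' * (γ * arctan s - α * (s / (1 + s ^ 2)))|
      ≤ |v'| * |arctan s| + |v / w * w'| * |γ * arctan s - α * (s / (1 + s ^ 2))| := by
        rw [← abs_mul, ← abs_mul]
        exact abs_add_le _ _
    _ ≤ |v'| * 2 + |v'| * (γ * 2 + α * 1) := by
        gcongr
        exact abs_arctan_le_two s
    _ ≤ 2 * (1 + γ + α) * |v'| := by nlinarith [mul_nonneg hα (abs_nonneg v')]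

lemma integral_mul_deriv_mul_rpow_div_le {u u' v v' w w' : ℝ → ℝ} {a b α γ : ℝ} (hab : a ≤ b)
    (hu : ∀ x, HasDerivAt u (u' x) x) (hv : ∀ x, HasDerivAt v (v' x) x)
    (hw : ∀ x, HasDerivAt w (w' x) x) (hu' : Continuous u') (hv' : Continuous v')
    (hw' : Continuous w') (huab : u b = u a) (hvab : v b = v a) (hwab : w b = w a)
    (hw₀ : ∀ x, 0 < w x) (hvw : ∀ x, |v x| ≤ w x) (hwv' : ∀ x, |w' x| ≤ |v' x|)
    (hα : 0 ≤ α) (hγ : 0 ≤ γ) :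
    ∫ x in a..b, v x * u' x * w x ^ (γ - α) / (1 + (u x * w x ^ (-α)) ^ 2) ≤
      2 * (1 + γ + α) * ∫ x in a..b, w x ^ γ * |v' x| := by
  have huc : Continuous u := continuous_iff_continuousAt.2 fun x => (hu x).continuousAt
  have hvc : Continuous v := continuous_iff_continuousAt.2 fun x => (hv x).continuousAt
  have hwc : Continuous w := continuous_iff_continuousAt.2 fun x => (hw x).continuousAt
  have hwpow (t : ℝ) : Continuous fun x => w x ^ t := hwc.rpow_const fun x => .inl (hw₀ x).ne'
  set s : ℝ → ℝ := fun x => u x * w x ^ (-α)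
  have hsc : Continuous s := huc.mul (hwpow _)
  have hden (x : ℝ) : 1 + s x ^ 2 ≠ 0 := by positivity
  set main : ℝ → ℝ := fun x => v x * u' x * w x ^ (γ - α) / (1 + s x ^ 2)
  set rest : ℝ → ℝ := fun x => w x ^ γ * (v' x * arctan (s x) +
    v x / w x * w' x * (γ * arctan (s x) - α * (s x / (1 + s x ^ 2)))) with hrest
  have hmainc : Continuous main :=
    ((hvc.mul hu').mul (hwpow _)).div₀ (by fun_prop) hden
  have hrestc : Continuous rest := by
    have := hwpow γ
    have : Continuous fun x => arctan (s x) := continuous_arctan.comp hsc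
    have : Continuous fun x => v x / w x := hvc.div₀ hwc fun x => (hw₀ x).ne'
    have : Continuous fun x => s x / (1 + s x ^ 2) := hsc.div₀ (by fun_prop) hden
    fun_prop
  have hzero : (∫ x in a..b, rest x) + ∫ x in a..b, main x = 0 := by
    rw [← intervalIntegral.integral_add (hrestc.intervalIntegrable _ _)
      (hmainc.intervalIntegrable _ _), intervalIntegral.integral_eq_sub_of_hasDerivAt
      (fun x _ => hasDerivAt_mul_rpow_mul_arctan (hu x) (hv x) (hw x) (hw₀ x) α γ)
      ((hrestc.add hmainc).intervalIntegrable _ _), huab, hvab, hwab, sub_self]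
  calc ∫ x in a..b, main x = ∫ x in a..b, -rest x := by
        rw [intervalIntegral.integral_neg]
        linarith
    _ ≤ ∫ x in a..b, 2 * (1 + γ + α) * (w x ^ γ * |v' x|) := by
        refine intervalIntegral.integral_mono_on hab (hrestc.neg.intervalIntegrable _ _)
          ((((hwpow γ).mul hv'.abs).const_mul _).intervalIntegrable _ _) fun x _ => ?_
        calc -rest x ≤ |rest x| := neg_le_abs _
          _ ≤ w x ^ γ * (2 * (1 + γ + α) * |v' x|) := by
            rw [hrest, abs_mul, abs_of_nonneg (rpow_nonneg (hw₀ x).le γ)]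
            gcongr
            · exact rpow_nonneg (hw₀ x).le γ
            · exact abs_arctan_combination_le (s x) (hvw x) (hwv' x) hα hγ
          _ = 2 * (1 + γ + α) * (w x ^ γ * |v' x|) := by ring
    _ = 2 * (1 + γ + α) * ∫ x in a..b, w x ^ γ * |v' x| :=
        intervalIntegral.integral_const_mul _ _

/-- A smooth approximation of `|t|` from above, exact at `ε = 0`. -/
def smoothAbs (ε t : ℝ) : ℝ := √(t ^ 2 + ε ^ 2)

lemma smoothAbs_zero (t : ℝ) : smoothAbs 0 t = |t| := by simp [smoothAbs, sqrt_sq_eq_abs]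

lemma sq_smoothAbs (ε t : ℝ) : smoothAbs ε t ^ 2 = t ^ 2 + ε ^ 2 := sq_sqrt (by positivity)

lemma smoothAbs_pos {ε : ℝ} (hε : 0 < ε) (t : ℝ) : 0 < smoothAbs ε t := sqrt_pos.2 (by positivity)

lemma abs_le_smoothAbs (ε t : ℝ) : |t| ≤ smoothAbs ε t := abs_le_sqrt (by nlinarith [sq_nonneg ε])

lemma continuous_smoothAbs : Continuous fun p : ℝ × ℝ => smoothAbs p.1 p.2 := by
  unfold smoothAbs
  fun_prop

lemma hasDerivAt_smoothAbs_comp {v : ℝ → ℝ} {v' x ε : ℝ} (hv : HasDerivAt v v' x) (hε : 0 < ε) :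
    HasDerivAt (fun y => smoothAbs ε (v y)) (v x / smoothAbs ε (v x) * v') x := by
  have hpos : v x ^ 2 + ε ^ 2 ≠ 0 := by positivity
  refine (((hv.pow 2).add_const (ε ^ 2)).sqrt hpos).congr_deriv ?_
  simp only [Pi.pow_apply, smoothAbs, Nat.cast_ofNat, Nat.add_one_sub_one, pow_one]
  field_simp

lemma rpow_le_two_mul_div_add {v w ε s r : ℝ} (hε : 0 ≤ ε) (hw : 0 < w)
    (hwv : w ^ 2 = v ^ 2 + ε ^ 2) (hs : s ^ 2 ≤ 1) :
    w ^ r ≤ 2 * (v ^ 2 * w ^ (r - 2) / (1 + s ^ 2)) + ε * w ^ (r - 1) := by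
  have hεw : ε ≤ w := le_of_sq_le_sq (by nlinarith [sq_nonneg v]) hw.le
  have hr₁ : w ^ (r - 1) = w * w ^ (r - 2) := by
    rw [show r - 1 = 1 + (r - 2) by ring, rpow_add hw, rpow_one]
  have hr₂ : w ^ r = w ^ 2 * w ^ (r - 2) := by
    rw [← rpow_natCast, ← rpow_add hw]
    norm_num
  have hpos : 0 < w ^ (r - 2) := rpow_pos_of_pos hw _
  have hhalf : v ^ 2 * w ^ (r - 2) ≤ 2 * (v ^ 2 * w ^ (r - 2) / (1 + s ^ 2)) := by
    rw [← mul_div_assoc, le_div_iff₀ (by positivity)]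
    nlinarith [mul_nonneg (sq_nonneg v) hpos.le]
  calc w ^ r = v ^ 2 * w ^ (r - 2) + ε * ε * w ^ (r - 2) := by rw [hr₂, hwv]; ring
    _ ≤ 2 * (v ^ 2 * w ^ (r - 2) / (1 + s ^ 2)) + ε * w * w ^ (r - 2) := by gcongr
    _ = _ := by rw [hr₁]; ring

lemma rpow_le_add_two_mul_div_add {u v w F K ε α r : ℝ} (hK : 0 < K) (hε : 0 ≤ ε) (hw : 0 < w)
    (hwv : w ^ 2 = v ^ 2 + ε ^ 2) (hF₀ : 0 ≤ F) (hF : K * w ^ α ≤ |u| → w ^ r ≤ F) :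
    w ^ r ≤ F + 2 * (v ^ 2 * w ^ (r - 2) / (1 + (u / K * w ^ (-α)) ^ 2)) + ε * w ^ (r - 1) := by
  rcases le_total (K * w ^ α) |u| with hlarge | hsmall
  · have : 0 ≤ v ^ 2 * w ^ (r - 2) / (1 + (u / K * w ^ (-α)) ^ 2) := by positivity
    have : 0 ≤ ε * w ^ (r - 1) := by positivity
    linarith [hF hlarge]
  · have hs : (u / K * w ^ (-α)) ^ 2 ≤ 1 := by
      rw [sq_le_one_iff_abs_le_one, abs_mul, abs_div, abs_of_pos hK,
        abs_of_pos (rpow_pos_of_pos hw _), rpow_neg hw.le, ← div_eq_mul_inv, div_div]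
      exact div_le_one_of_le₀ hsmall (by positivity)
    linarith [rpow_le_two_mul_div_add (r := r) hε hw hwv hs]

lemma integral_sq_mul_smoothAbs_rpow_div_le {u v z : ℝ → ℝ} {a b α γ K ε : ℝ} (hab : a ≤ b)
    (hu : ∀ x, HasDerivAt u (v x) x) (hv : ∀ x, HasDerivAt v (z x) x) (hz : Continuous z)
    (huab : u b = u a) (hvab : v b = v a) (hα : 0 ≤ α) (hγ : 0 ≤ γ) (hK : 0 < K) (hε : 0 < ε) :
    ∫ x in a..b, v x ^ 2 * smoothAbs ε (v x) ^ (γ - α) /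
        (1 + (u x / K * smoothAbs ε (v x) ^ (-α)) ^ 2) ≤
      2 * (1 + γ + α) * K * ∫ x in a..b, smoothAbs ε (v x) ^ γ * |z x| := by
  have hvc : Continuous v := continuous_iff_continuousAt.2 fun x => (hv x).continuousAt
  have hwc : Continuous fun x => smoothAbs ε (v x) :=
    continuous_smoothAbs.comp (continuous_const.prodMk hvc)
  have hw₀ (x : ℝ) : 0 < smoothAbs ε (v x) := smoothAbs_pos hε _
  have hw' (x : ℝ) : |v x / smoothAbs ε (v x) * z x| ≤ |z x| := by
    rw [abs_mul, abs_div, abs_of_pos (hw₀ x)]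
    exact mul_le_of_le_one_left (abs_nonneg _)
      (div_le_one_of_le₀ (abs_le_smoothAbs _ _) (hw₀ x).le)
  have hmult := integral_mul_deriv_mul_rpow_div_le hab (fun x => (hu x).div_const K) hv
    (fun x => hasDerivAt_smoothAbs_comp (hv x) hε) (hvc.div_const K) hz
    ((hvc.div₀ hwc fun x => (hw₀ x).ne').mul hz) (by rw [huab]) hvab (by rw [hvab])
    hw₀ (fun x => abs_le_smoothAbs _ _) hw' hα hγ
  calc ∫ x in a..b, v x ^ 2 * smoothAbs ε (v x) ^ (γ - α) /
        (1 + (u x / K * smoothAbs ε (v x) ^ (-α)) ^ 2)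
      = K * ∫ x in a..b, v x * (v x / K) * smoothAbs ε (v x) ^ (γ - α) /
          (1 + (u x / K * smoothAbs ε (v x) ^ (-α)) ^ 2) := by
        rw [← intervalIntegral.integral_const_mul]
        refine intervalIntegral.integral_congr fun x _ => ?_
        field_simp
    _ ≤ K * (2 * (1 + γ + α) * ∫ x in a..b, smoothAbs ε (v x) ^ γ * |z x|) := by gcongr
    _ = 2 * (1 + γ + α) * K * ∫ x in a..b, smoothAbs ε (v x) ^ γ * |z x| := by ring

lemma integral_abs_deriv_rpow_le_smoothAbs {u v z F : ℝ → ℝ} {a b α γ r K ε : ℝ} (hab : a ≤ b)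
    (hu : ∀ x, HasDerivAt u (v x) x) (hv : ∀ x, HasDerivAt v (z x) x) (hz : Continuous z)
    (huab : u b = u a) (hvab : v b = v a) (hα : 0 ≤ α) (hγ : 0 ≤ γ) (hr : 0 ≤ r)
    (hrγα : r - 2 = γ - α) (hK : 0 < K) (hε : 0 < ε) (hFc : Continuous F) (hF₀ : ∀ x, 0 ≤ F x)
    (hF : ∀ x w, 0 < w → K * w ^ α ≤ |u x| → w ^ r ≤ F x) :
    ∫ x in a..b, |v x| ^ r ≤ (∫ x in a..b, F x) +
      4 * (1 + γ + α) * K * (∫ x in a..b, smoothAbs ε (v x) ^ γ * |z x|) +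
      ε * ∫ x in a..b, smoothAbs ε (v x) ^ (r - 1) := by
  have huc : Continuous u := continuous_iff_continuousAt.2 fun x => (hu x).continuousAt
  have hvc : Continuous v := continuous_iff_continuousAt.2 fun x => (hv x).continuousAt
  have hwpow (t : ℝ) : Continuous fun x => smoothAbs ε (v x) ^ t :=
    (continuous_smoothAbs.comp (continuous_const.prodMk hvc)).rpow_const
      fun x => .inl (smoothAbs_pos hε _).ne'
  set T : ℝ → ℝ := fun x => v x ^ 2 * smoothAbs ε (v x) ^ (r - 2) /
    (1 + (u x / K * smoothAbs ε (v x) ^ (-α)) ^ 2)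
  have hTc : Continuous T := ((hvc.pow 2).mul (hwpow _)).div₀
    (continuous_const.add (((huc.div_const K).mul (hwpow _)).pow 2)) fun x => by positivity
  have hT : ∫ x in a..b, T x ≤
      2 * (1 + γ + α) * K * ∫ x in a..b, smoothAbs ε (v x) ^ γ * |z x| := by
    simp only [T, hrγα]
    exact integral_sq_mul_smoothAbs_rpow_div_le hab hu hv hz huab hvab hα hγ hK hε
  have hFT : Continuous fun x => F x + 2 * T x := hFc.add (hTc.const_mul 2)
  have hrest : Continuous fun x => ε * smoothAbs ε (v x) ^ (r - 1) := (hwpow _).const_mul ε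
  calc ∫ x in a..b, |v x| ^ r
      ≤ ∫ x in a..b, (F x + 2 * T x + ε * smoothAbs ε (v x) ^ (r - 1)) := by
        refine intervalIntegral.integral_mono_on hab
          ((hvc.abs.rpow_const fun _ => .inr hr).intervalIntegrable _ _)
          ((hFT.add hrest).intervalIntegrable _ _)
          fun x _ => (rpow_le_rpow (abs_nonneg _) (abs_le_smoothAbs ε _) hr).trans ?_
        exact rpow_le_add_two_mul_div_add hK hε.le (smoothAbs_pos hε _) (sq_smoothAbs _ _) (hF₀ x)
          (hF x _ (smoothAbs_pos hε _))
    _ = (∫ x in a..b, F x) + 2 * (∫ x in a..b, T x) +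
          ε * ∫ x in a..b, smoothAbs ε (v x) ^ (r - 1) := by
        rw [intervalIntegral.integral_add (hFT.intervalIntegrable _ _)
          (hrest.intervalIntegrable _ _), intervalIntegral.integral_add
          (hFc.intervalIntegrable _ _) ((hTc.const_mul 2).intervalIntegrable _ _),
          intervalIntegral.integral_const_mul, intervalIntegral.integral_const_mul]
    _ ≤ _ := by linarith

lemma continuous_integral_smoothAbs_rpow_mul {v g : ℝ → ℝ} (hv : Continuous v) (hg : Continuous g)
    {t : ℝ} (ht : 0 ≤ t) (a b : ℝ) :
    Continuous fun ε => ∫ x in a..b, smoothAbs ε (v x) ^ t * g x :=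
  intervalIntegral.continuous_parametric_intervalIntegral_of_continuous'
    (((continuous_smoothAbs.comp (continuous_fst.prodMk (hv.comp continuous_snd))).rpow_const
      fun _ => .inr ht).mul (hg.comp continuous_snd)) a b

lemma integral_abs_deriv_rpow_le {u v z F : ℝ → ℝ} {a b α γ r K : ℝ} (hab : a ≤ b)
    (hu : ∀ x, HasDerivAt u (v x) x) (hv : ∀ x, HasDerivAt v (z x) x) (hz : Continuous z)
    (huab : u b = u a) (hvab : v b = v a) (hα : 0 ≤ α) (hγ : 0 ≤ γ) (hr : 1 ≤ r)
    (hrγα : r - 2 = γ - α) (hK : 0 < K) (hFc : Continuous F) (hF₀ : ∀ x, 0 ≤ F x)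
    (hF : ∀ x w, 0 < w → K * w ^ α ≤ |u x| → w ^ r ≤ F x) :
    ∫ x in a..b, |v x| ^ r ≤ (∫ x in a..b, F x) +
      4 * (1 + γ + α) * K * ∫ x in a..b, |v x| ^ γ * |z x| := by
  have hvc : Continuous v := continuous_iff_continuousAt.2 fun x => (hv x).continuousAt
  set R : ℝ → ℝ := fun ε => (∫ x in a..b, F x) +
      4 * (1 + γ + α) * K * (∫ x in a..b, smoothAbs ε (v x) ^ γ * |z x|) +
      ε * ∫ x in a..b, smoothAbs ε (v x) ^ (r - 1) * 1
  have hR : Tendsto R (𝓝[>] 0) (𝓝 (R 0)) := by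
    have := continuous_integral_smoothAbs_rpow_mul hvc hz.abs hγ a b
    have := continuous_integral_smoothAbs_rpow_mul hvc continuous_one (sub_nonneg.2 hr) a b
    exact (show Continuous R by fun_prop).continuousAt.tendsto.mono_left nhdsWithin_le_nhds
  have hle : ∀ᶠ ε in 𝓝[>] 0, ∫ x in a..b, |v x| ^ r ≤ R ε := by
    filter_upwards [self_mem_nhdsWithin] with ε hε
    simpa only [R, mul_one] using integral_abs_deriv_rpow_le_smoothAbs hab hu hv hz huab hvab hα hγ
      (zero_le_one.trans hr) hrγα hK hε hFc hF₀ hF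
  simpa only [R, smoothAbs_zero, zero_mul, add_zero] using ge_of_tendsto hR hle

lemma exists_continuous_dominating {u : ℝ → ℝ} (hu : Continuous u) (hper : Function.Periodic u 1)
    {a A r : ℝ} (ha₀ : 0 ≤ a) (ha₁ : a ≤ 1) (hA : 0 < A) (hU : 0 < recipLpNorm a u) :
    ∃ F : ℝ → ℝ, Continuous F ∧ (∀ x, 0 ≤ F x) ∧ ∫ x in (0 : ℝ)..1, F x ≤ A / 2 ∧
      ∀ x w, 0 < w → 2 * recipLpNorm a u / A ^ a * w ^ (r * a) ≤ |u x| → w ^ r ≤ F x := by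
  rcases ha₀.eq_or_lt with rfl | ha
  · refine ⟨0, continuous_zero, fun _ => le_rfl, by simpa using (half_pos hA).le, fun x w _ h => ?_⟩
    rw [mul_zero, rpow_zero, rpow_zero, div_one, mul_one] at h
    linarith [abs_le_recipLpNorm_zero hu hper x]
  set K := 2 * recipLpNorm a u / A ^ a
  have hK : 0 < K := by positivity
  refine ⟨fun x => |u x| ^ a⁻¹ / K ^ a⁻¹,
    (hu.abs.rpow_const fun _ => .inr (by positivity)).div_const _, fun x => by positivity, ?_,
    fun x w hw h => ?_⟩
  · have hKpow : K ^ a⁻¹ = 2 ^ a⁻¹ * recipLpNorm a u ^ a⁻¹ / A := by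
      rw [div_rpow (by positivity) (by positivity), mul_rpow zero_le_two hU.le,
        rpow_rpow_inv hA.le ha.ne']
    have htwo : (2 : ℝ) ≤ 2 ^ a⁻¹ :=
      self_le_rpow_of_one_le one_le_two ((one_le_inv₀ ha).2 ha₁)
    have hU' := rpow_pos_of_pos hU a⁻¹
    rw [intervalIntegral.integral_div, integral_abs_rpow_inv hu ha, hKpow, ← div_mul,
      div_mul_cancel_right₀ hU'.ne', inv_mul_eq_div]
    gcongr
  · calc w ^ r = (w ^ (r * a)) ^ a⁻¹ := by
          rw [← rpow_mul hw.le, mul_inv_cancel_right₀ ha.ne']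
      _ ≤ (|u x| / K) ^ a⁻¹ := by
          gcongr
          rwa [le_div_iff₀' hK]
      _ = |u x| ^ a⁻¹ / K ^ a⁻¹ := div_rpow (abs_nonneg _) hK.le _

lemma periodic_deriv {u : ℝ → ℝ} {T : ℝ} (hu : Function.Periodic u T) :
    Function.Periodic (deriv u) T := fun x => by
  rw [← deriv_comp_add_const, funext hu]

lemma sq_le_of_forall_abs_deriv_le {u v z : ℝ → ℝ} {M₀ M₂ : ℝ}
    (hu : ∀ x, HasDerivAt u (v x) x) (hv : ∀ x, HasDerivAt v (z x) x) (hM₀ : ∀ x, |u x| ≤ M₀)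
    (hM₂ : ∀ x, |z x| ≤ M₂) (x : ℝ) : v x ^ 2 ≤ 8 * (M₀ * M₂) := by
  have hv' (y : ℝ) : |v y - v x| ≤ M₂ * |y - x| := by
    simpa only [norm_eq_abs] using convex_univ.norm_image_sub_le_of_norm_hasDerivWithin_le
      (fun y _ => (hv y).hasDerivWithinAt) (fun y _ => hM₂ y) (mem_univ x) (mem_univ y)
  have htaylor (l : ℝ) : |u (x + l) - u x - v x * l| ≤ M₂ * |l| * |l| := by
    have hderiv (y : ℝ) : HasDerivAt (fun y => u y - v x * y) (v y - v x) y :=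
      (hu y).sub (((hasDerivAt_id y).const_mul (v x)).congr_deriv (mul_one _))
    have hbound (y : ℝ) (hy : y ∈ uIcc x (x + l)) : ‖v y - v x‖ ≤ M₂ * |l| := by
      refine (hv' y).trans (mul_le_mul_of_nonneg_left ?_ ((abs_nonneg _).trans (hM₂ x)))
      simpa using abs_sub_left_of_mem_uIcc hy
    convert (convex_uIcc x (x + l)).norm_image_sub_le_of_norm_hasDerivWithin_le
      (fun y _ => (hderiv y).hasDerivWithinAt) hbound left_mem_uIcc right_mem_uIcc using 1
    · rw [norm_eq_abs]
      congr 1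
      ring
    · rw [add_sub_cancel_left, norm_eq_abs]
  have hquad (l : ℝ) : 0 ≤ M₂ * (l * l) + v x * l + 2 * M₀ := by
    have h := htaylor l
    rw [mul_assoc, abs_mul_abs_self] at h
    linarith [(abs_le.1 h).1, (abs_le.1 h).2, (abs_le.1 (hM₀ x)).1, (abs_le.1 (hM₀ x)).2,
      (abs_le.1 (hM₀ (x + l))).1, (abs_le.1 (hM₀ (x + l))).2]
  have hdiscrim : v x ^ 2 - 4 * M₂ * (2 * M₀) ≤ 0 := discrim_le_zero hquad
  linarith

lemma sq_recipLpNorm_zero_deriv_le {u : ℝ → ℝ} (hu : ContDiff ℝ 2 u)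
    (hper : Function.Periodic u 1) :
    recipLpNorm 0 (deriv u) ^ 2 ≤ 8 * (recipLpNorm 0 u * recipLpNorm 0 (deriv (deriv u))) := by
  have hv : ContDiff ℝ 1 (deriv u) := ContDiff.deriv' hu
  have hsq (x : ℝ) := sq_le_of_forall_abs_deriv_le
    (fun x => (hu.differentiable two_ne_zero x).hasDerivAt)
    (fun x => (hv.differentiable one_ne_zero x).hasDerivAt)
    (abs_le_recipLpNorm_zero hu.continuous hper)
    (abs_le_recipLpNorm_zero (hv.continuous_deriv le_rfl) (periodic_deriv (periodic_deriv hper))) x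
  rw [← sq_sqrt ((sq_nonneg _).trans (hsq 0))]
  gcongr
  · exact recipLpNorm_nonneg _ _
  exact recipLpNorm_zero_le fun x => abs_le_sqrt (hsq x)

lemma integral_abs_rpow_mul_abs_le {v z : ℝ → ℝ} (hv : Continuous v) (hz : Continuous z)
    {a e γ : ℝ} (ha : 0 ≤ a) (he : 0 ≤ e) (hγ : 0 ≤ γ) (hγae : γ * e + a = 1) :
    ∫ x in (0 : ℝ)..1, |v x| ^ γ * |z x| ≤ recipLpNorm e v ^ γ * recipLpNorm a z := by
  have hvγ : Continuous fun x => |v x| ^ γ := hv.abs.rpow_const fun _ => .inr hγ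
  calc ∫ x in (0 : ℝ)..1, |v x| ^ γ * |z x| = recipLpNorm 1 (fun x => |v x| ^ γ * |z x|) := by
        refine Eq.trans ?_ (recipLpNorm_one (hvγ.mul hz.abs)).symm
        refine intervalIntegral.integral_congr fun x _ => ?_
        exact (abs_of_nonneg (by positivity)).symm
    _ ≤ recipLpNorm e v ^ γ * recipLpNorm a z := by
        rw [← hγae, ← recipLpNorm_abs_rpow e v hγ, ← recipLpNorm_abs a z]
        exact recipLpNorm_mul_le hvγ hz.abs (by positivity) ha

lemma recipLpNorm_deriv_rpow_le {u : ℝ → ℝ} (hu : ContDiff ℝ 2 u) (hper : Function.Periodic u 1)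
    {a b e : ℝ} (ha₀ : 0 ≤ a) (ha₁ : a ≤ 1) (hb₀ : 0 ≤ b) (hb₁ : b ≤ 1) (hab : a + b = 2 * e)
    (he : 0 < e) (hU : 0 < recipLpNorm b u) (hV : 0 < recipLpNorm e (deriv u)) :
    recipLpNorm e (deriv u) ^ e⁻¹ ≤ recipLpNorm e (deriv u) ^ e⁻¹ / 2 +
      4 * (1 + e⁻¹ * (1 - a) + e⁻¹ * b) *
        (2 * recipLpNorm b u / (recipLpNorm e (deriv u) ^ e⁻¹) ^ b) *
        (recipLpNorm e (deriv u) ^ (e⁻¹ * (1 - a)) * recipLpNorm a (deriv (deriv u))) := by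
  have hv : ContDiff ℝ 1 (deriv u) := ContDiff.deriv' hu
  have hz : Continuous (deriv (deriv u)) := hv.continuous_deriv le_rfl
  have hγ : 0 ≤ e⁻¹ * (1 - a) := mul_nonneg (by positivity) (sub_nonneg.2 ha₁)
  have hr : 1 ≤ e⁻¹ := (one_le_inv₀ he).2 (by linarith)
  have hexp : e⁻¹ - 2 = e⁻¹ * (1 - a) - e⁻¹ * b := by
    field_simp
    linarith
  obtain ⟨F, hFc, hF₀, hFint, hF⟩ := exists_continuous_dominating (r := e⁻¹) hu.continuous hper
    hb₀ hb₁ (rpow_pos_of_pos hV e⁻¹) hU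
  have hmain := integral_abs_deriv_rpow_le zero_le_one
    (fun x => (hu.differentiable two_ne_zero x).hasDerivAt)
    (fun x => (hv.differentiable one_ne_zero x).hasDerivAt) hz (by simpa using hper 0)
    (by simpa using periodic_deriv hper 0) (by positivity : 0 ≤ e⁻¹ * b) hγ hr hexp
    (by positivity) hFc hF₀ hF
  rw [integral_abs_rpow_inv hv.continuous he] at hmain
  have hHolder := integral_abs_rpow_mul_abs_le hv.continuous hz ha₀ he.le hγ
    (by rw [mul_right_comm, inv_mul_cancel₀ he.ne']; ring)
  refine hmain.trans ?_
  gcongr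

lemma sq_le_of_rpow_inv_le_half_add {U V Z D a b e : ℝ} (hV : 0 < V) (he : e ≠ 0)
    (hab : a + b = 2 * e)
    (h : V ^ e⁻¹ ≤ V ^ e⁻¹ / 2 + D * (2 * U / (V ^ e⁻¹) ^ b) * (V ^ (e⁻¹ * (1 - a)) * Z)) :
    V ^ 2 ≤ 4 * D * (U * Z) := by
  have hsq : V ^ e⁻¹ = V ^ 2 * V ^ (e⁻¹ - 2) := by
    rw [← rpow_natCast, ← rpow_add hV]
    norm_num
  have hquot : V ^ (e⁻¹ * (1 - a)) / (V ^ e⁻¹) ^ b = V ^ (e⁻¹ - 2) := by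
    rw [← rpow_mul hV.le, ← rpow_sub hV]
    congr 1
    field_simp
    linarith
  refine le_of_mul_le_mul_right ?_ (rpow_pos_of_pos hV (e⁻¹ - 2))
  calc V ^ 2 * V ^ (e⁻¹ - 2) = V ^ e⁻¹ := hsq.symm
    _ ≤ 2 * (D * (2 * U / (V ^ e⁻¹) ^ b) * (V ^ (e⁻¹ * (1 - a)) * Z)) := by linarith
    _ = 4 * D * (U * Z) * (V ^ (e⁻¹ * (1 - a)) / (V ^ e⁻¹) ^ b) := by ring
    _ = 4 * D * (U * Z) * V ^ (e⁻¹ - 2) := by rw [hquot]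

-- At `e = 0`, i.e. `a = b = 0`, the convention `32 / 0 = 0` leaves the constant `16`.
lemma sq_recipLpNorm_deriv_le {u : ℝ → ℝ} (hu : ContDiff ℝ 2 u) (hper : Function.Periodic u 1)
    {a b e : ℝ} (ha₀ : 0 ≤ a) (ha₁ : a ≤ 1) (hb₀ : 0 ≤ b) (hb₁ : b ≤ 1) (hab : a + b = 2 * e) :
    recipLpNorm e (deriv u) ^ 2 ≤
      (16 + 32 / e) * (recipLpNorm b u * recipLpNorm a (deriv (deriv u))) := by
  have hUZ : 0 ≤ recipLpNorm b u * recipLpNorm a (deriv (deriv u)) :=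
    mul_nonneg (recipLpNorm_nonneg _ _) (recipLpNorm_nonneg _ _)
  rcases (by linarith : 0 ≤ e).eq_or_lt with rfl | he
  · obtain ⟨rfl, rfl⟩ : a = 0 ∧ b = 0 := ⟨by linarith, by linarith⟩
    rw [div_zero, add_zero]
    linarith [sq_recipLpNorm_zero_deriv_le hu hper]
  rcases (recipLpNorm_nonneg e (deriv u)).eq_or_lt' with hV | hV
  · rw [hV, zero_pow two_ne_zero]
    positivity
  have hU : 0 < recipLpNorm b u := (recipLpNorm_nonneg _ _).lt_of_ne' fun h => hV.ne' <| by
    rw [eq_zero_of_recipLpNorm_eq_zero hu.continuous hper h, deriv_zero]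
    exact congrArg ENNReal.toReal eLpNorm_zero
  have hconst : 4 * (4 * (1 + e⁻¹ * (1 - a) + e⁻¹ * b)) ≤ 16 + 32 / e := by
    have : e⁻¹ * (1 - a + b) ≤ e⁻¹ * 2 := by gcongr; linarith
    rw [div_eq_mul_inv]
    linarith
  exact (sq_le_of_rpow_inv_le_half_add hV he.ne' hab
    (recipLpNorm_deriv_rpow_le hu hper ha₀ ha₁ hb₀ hb₁ hab he hU hV)).trans (by gcongr)

lemma pow_succ_le_mul_pow_of_sq_le {s : ℕ → ℝ} {m : ℕ} (hs : ∀ j, 0 ≤ s j)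
    (h : ∀ j, j + 2 ≤ m → s (j + 1) ^ 2 ≤ s j * s (j + 2)) {j : ℕ} (hj : j + 1 ≤ m) :
    s j ^ (j + 1) ≤ s 0 * s (j + 1) ^ j := by
  induction j with
  | zero => simp
  | succ j ih =>
    rcases (hs (j + 1)).eq_or_lt' with h₀ | hpos
    · rw [h₀, zero_pow (by omega)]
      exact mul_nonneg (hs 0) (pow_nonneg (hs _) _)
    refine le_of_mul_le_mul_left ?_ (pow_pos hpos j)
    calc s (j + 1) ^ j * s (j + 1) ^ (j + 1 + 1) = (s (j + 1) ^ 2) ^ (j + 1) := by ring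
      _ ≤ (s j * s (j + 2)) ^ (j + 1) := pow_le_pow_left₀ (sq_nonneg _) (h j hj) _
      _ = s j ^ (j + 1) * s (j + 2) ^ (j + 1) := mul_pow _ _ _
      _ ≤ s 0 * s (j + 1) ^ j * s (j + 2) ^ (j + 1) :=
        mul_le_mul_of_nonneg_right (ih (by omega)) (pow_nonneg (hs _) _)
      _ = s (j + 1) ^ j * (s 0 * s (j + 1 + 1) ^ (j + 1)) := by ring

lemma pow_add_le_mul_pow_of_sq_le {s : ℕ → ℝ} {i k : ℕ} (hs : ∀ j, 0 ≤ s j)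
    (h : ∀ j, j + 2 ≤ i + k → s (j + 1) ^ 2 ≤ s j * s (j + 2)) :
    s i ^ (i + k) ≤ s 0 ^ k * s (i + k) ^ i := by
  induction k with
  | zero => simp
  | succ k ih =>
    rcases Nat.eq_zero_or_pos (i + k) with h₀ | hpos
    · obtain ⟨rfl, rfl⟩ := Nat.add_eq_zero_iff.1 h₀
      simp
    refine le_of_pow_le_pow_left₀ hpos.ne'
      (mul_nonneg (pow_nonneg (hs 0) _) (pow_nonneg (hs _) _)) ?_
    calc (s i ^ (i + (k + 1))) ^ (i + k) = (s i ^ (i + k)) ^ (i + k + 1) := by ring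
      _ ≤ (s 0 ^ k * s (i + k) ^ i) ^ (i + k + 1) :=
        pow_le_pow_left₀ (pow_nonneg (hs i) _) (ih fun j hj => h j (by omega)) _
      _ = s 0 ^ (k * (i + k + 1)) * (s (i + k) ^ (i + k + 1)) ^ i := by ring
      _ ≤ s 0 ^ (k * (i + k + 1)) * (s 0 * s (i + k + 1) ^ (i + k)) ^ i :=
        mul_le_mul_of_nonneg_left (pow_le_pow_left₀ (pow_nonneg (hs _) _)
          (pow_succ_le_mul_pow_of_sq_le hs h le_rfl) _) (pow_nonneg (hs 0) _)
      _ = (s 0 ^ (k + 1) * s (i + (k + 1)) ^ i) ^ (i + k) := by rw [← add_assoc]; ring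

lemma pow_add_le_of_sq_le_mul {s : ℕ → ℝ} {c : ℝ} {i k : ℕ} (hs : ∀ j, 0 ≤ s j) (hc : 0 < c)
    (h : ∀ j, j + 2 ≤ i + k → s (j + 1) ^ 2 ≤ c ^ 2 * (s j * s (j + 2))) :
    s i ^ (i + k) ≤ (c ^ (i * k)) ^ (i + k) * (s 0 ^ k * s (i + k) ^ i) := by
  -- The second difference of `j ^ 2` is `2`, so the weights `c ^ j ^ 2` absorb the factor `c ^ 2`.
  have hscaled := pow_add_le_mul_pow_of_sq_le (s := fun j => c ^ j ^ 2 * s j) (i := i) (k := k)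
    (fun j => mul_nonneg (pow_nonneg hc.le _) (hs j)) fun j hj => by
      calc (c ^ (j + 1) ^ 2 * s (j + 1)) ^ 2 = c ^ (2 * (j + 1) ^ 2) * s (j + 1) ^ 2 := by ring
        _ ≤ c ^ (2 * (j + 1) ^ 2) * (c ^ 2 * (s j * s (j + 2))) := by gcongr; exact h j hj
        _ = c ^ j ^ 2 * s j * (c ^ (j + 2) ^ 2 * s (j + 2)) := by ring
  refine le_of_mul_le_mul_left ?_ (pow_pos hc (i ^ 2 * (i + k)))
  calc c ^ (i ^ 2 * (i + k)) * s i ^ (i + k) = (c ^ i ^ 2 * s i) ^ (i + k) := by ring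
    _ ≤ (c ^ 0 ^ 2 * s 0) ^ k * (c ^ (i + k) ^ 2 * s (i + k)) ^ i := hscaled
    _ = c ^ (i ^ 2 * (i + k)) * ((c ^ (i * k)) ^ (i + k) * (s 0 ^ k * s (i + k) ^ i)) := by ring

lemma le_mul_rpow_of_sq_le_mul {s : ℕ → ℝ} {c : ℝ} {i m : ℕ} (hs : ∀ j, 0 ≤ s j) (hc : 0 < c)
    (hm : m ≠ 0) (hi : i ≤ m)
    (h : ∀ j, j + 2 ≤ m → s (j + 1) ^ 2 ≤ c ^ 2 * (s j * s (j + 2))) :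
    s i ≤ c ^ (i * (m - i)) * (s m ^ (i / m : ℝ) * s 0 ^ (1 - i / m : ℝ)) := by
  obtain ⟨k, rfl⟩ := Nat.exists_eq_add_of_le hi
  have hn : ((i + k : ℕ) : ℝ) ≠ 0 := by exact_mod_cast hm
  refine le_of_pow_le_pow_left₀ hm (mul_nonneg (by positivity)
    (mul_nonneg (rpow_nonneg (hs _) _) (rpow_nonneg (hs _) _))) ?_
  refine (pow_add_le_of_sq_le_mul hs hc h).trans_eq ?_
  have hk : (1 - (i : ℝ) / (i + k : ℕ)) = (k : ℝ) / (i + k : ℕ) := by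
    rw [one_sub_div hn]
    push_cast
    ring
  have hroot (x : ℝ) (hx : 0 ≤ x) (j : ℕ) : (x ^ ((j : ℝ) / (i + k : ℕ))) ^ (i + k) = x ^ j := by
    rw [← rpow_mul_natCast hx, div_mul_cancel₀ _ hn, rpow_natCast]
  rw [mul_pow, mul_pow, hk, hroot _ (hs _), hroot _ (hs _), Nat.add_sub_cancel_left,
    mul_comm (s 0 ^ k)]

lemma periodic_iteratedDeriv_s1 {h : ℝ → ℝ} {T : ℝ} (hper : Function.Periodic h T) (n : ℕ) :
    Function.Periodic (iteratedDeriv n h) T := by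
  induction n with
  | zero => rwa [iteratedDeriv_zero]
  | succ n ih => rw [iteratedDeriv_succ]; exact periodic_deriv ih

lemma exists_recipLpNorm_iteratedDeriv_le {m β : ℕ} (hm : m ≠ 0) (hβ : β ≤ m) {a b : ℝ}
    (ha₀ : 0 ≤ a) (ha₁ : a ≤ 1) (hb₀ : 0 ≤ b) (hb₁ : b ≤ 1) :
    ∃ C > 0, ∀ h : ℝ → ℝ, Function.Periodic h 1 → ContDiff ℝ m h →
      recipLpNorm (β / m * a + (1 - β / m) * b) (iteratedDeriv β h) ≤
        C * (recipLpNorm a (iteratedDeriv m h) ^ (β / m : ℝ) *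
          recipLpNorm b h ^ (1 - β / m : ℝ)) := by
  have hm' : (0 : ℝ) < m := by positivity
  set e : ℕ → ℝ := fun j => j / m * a + (1 - j / m) * b
  have he (j : ℕ) (hj : j ≤ m) : e j ∈ Icc 0 1 := by
    have hj' : (j : ℝ) / m ≤ 1 := div_le_one_of_le₀ (by exact_mod_cast hj) hm'.le
    exact convex_Icc (0 : ℝ) 1 ⟨ha₀, ha₁⟩ ⟨hb₀, hb₁⟩ (by positivity) (sub_nonneg.2 hj')
      (add_sub_cancel _ _)
  obtain ⟨M, hM⟩ := ((Finset.range m).image fun j => 16 + 32 / e (j + 1)).exists_le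
  refine ⟨max M 1 ^ (β * (m - β)), by positivity, fun h hper hh => ?_⟩
  have hstep (j : ℕ) (hj : j + 2 ≤ m) : recipLpNorm (e (j + 1)) (iteratedDeriv (j + 1) h) ^ 2 ≤
      max M 1 ^ 2 * (recipLpNorm (e j) (iteratedDeriv j h) *
        recipLpNorm (e (j + 2)) (iteratedDeriv (j + 2) h)) := by
    have hsmooth : ContDiff ℝ 2 (iteratedDeriv j h) := by
      rw [iteratedDeriv_eq_iterate]
      exact ContDiff.iterate_deriv' 2 j (hh.of_le (by exact_mod_cast (by omega : 2 + j ≤ m)))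
    have hmid : e (j + 2) + e j = 2 * e (j + 1) := by
      simp only [e]
      push_cast
      ring
    have hconst : 16 + 32 / e (j + 1) ≤ max M 1 ^ 2 :=
      ((hM _ (Finset.mem_image_of_mem _ (Finset.mem_range.2 (by omega)))).trans
        (le_max_left _ _)).trans (le_self_pow₀ (le_max_right _ _) two_ne_zero)
    rw [iteratedDeriv_succ (n := j + 1), iteratedDeriv_succ (n := j)]
    refine (sq_recipLpNorm_deriv_le hsmooth (periodic_iteratedDeriv_s1 hper j) (he _ hj).1 (he _ hj).2
      (he j (by omega)).1 (he j (by omega)).2 hmid).trans ?_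
    gcongr
    exact mul_nonneg (recipLpNorm_nonneg _ _) (recipLpNorm_nonneg _ _)
  simpa [e, hm'.ne'] using le_mul_rpow_of_sq_le_mul
    (s := fun j => recipLpNorm (e j) (iteratedDeriv j h)) (fun _ => recipLpNorm_nonneg _ _)
    (by positivity : 0 < max M 1) hm hβ hstep

lemma toReal_one_div_mem_Icc {p : ℝ≥0∞} (hp : 1 ≤ p) : (1 / p).toReal ∈ Icc 0 1 := by
  refine ⟨ENNReal.toReal_nonneg, ENNReal.toReal_le_of_le_ofReal zero_le_one ?_⟩
  simpa using hp

theorem gagliardo_nirenberg_b_general (m : ℕ) (hm : 1 ≤ m) (β : ℕ) (hβ : β ≤ m)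
    (q r : ℝ≥0∞) (hq : 1 ≤ q) (hr : 1 ≤ r) (p : ℝ≥0∞) (hp : 1 ≤ p)
    (θ : ℝ) (hθ : θ = (β : ℝ) / (m : ℝ))
    (hθeq : (β : ℝ) - (1 / r).toReal
      = θ * ((m : ℝ) - (1 / p).toReal) - (1 - θ) * (1 / q).toReal) :
    ∃ C > 0, ∀ h : ℝ → ℝ, Function.Periodic h 1 → ContDiff ℝ (m : ℕ∞) h →
      normKP β r h ≤ C * (normKP m p h) ^ θ * (lpNorm q h) ^ (1 - θ) := by
  have hm₀ : (m : ℝ) ≠ 0 := by positivity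
  have hθ₀ : 0 ≤ θ := hθ ▸ by positivity
  have hθ₁ : θ ≤ 1 := hθ ▸ div_le_one_of_le₀ (by exact_mod_cast hβ) (by positivity)
  have hexp : (1 / r).toReal = θ * (1 / p).toReal + (1 - θ) * (1 / q).toReal := by
    linarith [show θ * m = β from hθ ▸ div_mul_cancel₀ _ hm₀]
  obtain ⟨hp₀, hp₁⟩ := toReal_one_div_mem_Icc hp
  obtain ⟨hq₀, hq₁⟩ := toReal_one_div_mem_Icc hq
  obtain ⟨C, hC, hderiv⟩ := exists_recipLpNorm_iteratedDeriv_le (by omega) hβ hp₀ hp₁ hq₀ hq₁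
  refine ⟨C + 1, by positivity, fun h hper hh => ?_⟩
  have hne {s : ℝ≥0∞} (hs : 1 ≤ s) : s ≠ 0 := (one_pos.trans_le hs).ne'
  simp only [normKP, lpNorm_eq_recipLpNorm (hne hp), lpNorm_eq_recipLpNorm (hne hq),
    lpNorm_eq_recipLpNorm (hne hr), hexp]
  set X := recipLpNorm (1 / p).toReal (iteratedDeriv m h)
  set P := recipLpNorm (1 / p).toReal h
  set Q := recipLpNorm (1 / q).toReal h
  have hX : 0 ≤ X := recipLpNorm_nonneg _ _
  have hP : 0 ≤ P := recipLpNorm_nonneg _ _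
  have hQ : 0 ≤ Q ^ (1 - θ) := rpow_nonneg (recipLpNorm_nonneg _ _) _
  calc _ ≤ C * (X ^ θ * Q ^ (1 - θ)) + P ^ θ * Q ^ (1 - θ) :=
        add_le_add (by simpa only [hθ] using hderiv h hper hh)
          (recipLpNorm_convex_combination_le hh.continuous hp₀ hq₀ hθ₀ hθ₁)
    _ ≤ C * ((X + P) ^ θ * Q ^ (1 - θ)) + (X + P) ^ θ * Q ^ (1 - θ) := by
        gcongr
        exacts [le_add_of_nonneg_right hP, le_add_of_nonneg_left hX]
    _ = (C + 1) * (X + P) ^ θ * Q ^ (1 - θ) := by ring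

/-- **Gagliardo–Nirenberg inequality on the circle, part b) (endpoint exponents).**
Let `m ∈ ℕ`, `β ∈ ℕ₀` with `β ≤ m−1`, let `q, r ∈ [1,∞]` and `p = 1` or `p = ∞`.
If `θ = β/m` and `β − 1/r = θ(m − 1/p) − (1−θ)/q` holds, then there is
`C = C(β,p,q,r,m) > 0` such that every `C^m` function `h` on `S¹` satisfies
`|h|_{β,r} ≤ C |h|_{m,p}^θ |h|_q^{1−θ}`. -/
theorem gagliardo_nirenberg_b
    (m : ℕ) (hm : 1 ≤ m) (β : ℕ) (hβ : β ≤ m - 1)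
    (q r : ℝ≥0∞) (hq : 1 ≤ q) (hr : 1 ≤ r)
    (p : ℝ≥0∞) (hp : p = 1 ∨ p = ⊤)
    (θ : ℝ) (hθ : θ = (β : ℝ) / (m : ℝ))
    (hθeq : (β : ℝ) - (1 / r).toReal
      = θ * ((m : ℝ) - (1 / p).toReal) - (1 - θ) * (1 / q).toReal) :
    ∃ C > 0, ∀ h : ℝ → ℝ, Function.Periodic h 1 → ContDiff ℝ (m : ℕ∞) h →
      normKP β r h ≤ C * (normKP m p h) ^ θ * (lpNorm q h) ^ (1 - θ) :=
  gagliardo_nirenberg_b_general m hm β (by omega) q r hq hr p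
    (by rcases hp with rfl | rfl <;> simp) θ hθ hθeq

end BurgersTurb
end
end

section
/- Let ν ∈ (0,1] and let u : [0,∞) × S¹ → ℝ be a C^∞-smooth function (1-periodic in x) with ∫_{S¹} u(t,x) dx = 0 for all t ≥ 0, satisfying the free Burgers equation u_t + u u_x − ν u_{xx} = 0 pointwise. Then t · u_x(t,x) ≤ 1 for all t ≥ 0 and all x ∈ S¹. -/
open MeasureTheory Real Set Filter
open scoped ENNReal Topology

noncomputable section

namespace BurgersTurb

/-!
Maximise `t (u(t,x) - u(t,y)) - k (x - y)` over `0 ≤ t ≤ T` and `y ≤ x`, where `k > 1`. At a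
positive maximum `t > 0` and `y < x`, so `t u_x = k` at both points, `u_xx ≤ 0` at `x` and
`u_xx ≥ 0` at `y`. By the equation the time derivative there is
`(1 - k) (u(t,x) - u(t,y)) + ν t (u_xx(t,x) - u_xx(t,y)) < 0`, contradicting maximality.
Letting `k → 1`, the map `x ↦ x - t u(t,x)` is monotone. Comparing two points instead of applying
the maximum principle to `t u_x` avoids differentiating the equation.
-/

section DerivativeTests

variable {f f' : ℝ → ℝ} {a b c f'' : ℝ}

lemma second_deriv_nonpos_of_isLocalMax (hf : ∀ x, HasDerivAt f (f' x) x)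
    (hf' : HasDerivAt f' f'' a) (hmax : IsLocalMax f a) : f'' ≤ 0 := by
  have hderiv : deriv f = f' := funext fun x ↦ (hf x).deriv
  by_contra! hpos
  have hmin : IsLocalMin f a := by
    refine isLocalMin_of_deriv_deriv_pos ?_ hmax.deriv_eq_zero (hf a).continuousAt
    rwa [hderiv, hf'.deriv]
  have hconst : f =ᶠ[𝓝 a] fun _ ↦ f a := by
    filter_upwards [hmax, hmin] with x hle hge using le_antisymm hle hge
  have hzero : f' =ᶠ[𝓝 a] fun _ ↦ 0 := by
    simpa only [hderiv, deriv_const'] using hconst.deriv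
  exact hpos.ne' (hf'.unique ((hasDerivAt_const a 0).congr_of_eventuallyEq hzero))

lemma second_deriv_nonneg_of_isLocalMin (hf : ∀ x, HasDerivAt f (f' x) x)
    (hf' : HasDerivAt f' f'' a) (hmin : IsLocalMin f a) : 0 ≤ f'' :=
  neg_nonpos.mp <|
    second_deriv_nonpos_of_isLocalMax (fun x ↦ (hf x).fun_neg) hf'.fun_neg hmin.neg

lemma deriv_nonneg_of_isLocalMaxOn_Icc_right (hab : a < b) (hf : HasDerivWithinAt f c (Icc a b) b)
    (hmax : IsLocalMaxOn f (Icc a b) b) : 0 ≤ c := by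
  have hcone : a - b ∈ posTangentConeAt (Icc a b) b :=
    sub_mem_posTangentConeAt_of_segment_subset (by rw [segment_symm, segment_eq_Icc hab.le])
  have hle : (a - b) * c ≤ 0 := by
    simpa using hmax.hasFDerivWithinAt_nonpos hf.hasFDerivWithinAt hcone
  exact nonneg_of_mul_nonpos_right hle (sub_neg.mpr hab)

end DerivativeTests

/-- The two-point function of the doubling-of-variables argument: for `y < x` it is nonpositive
exactly when `t` times the slope of `u t` between `y` and `x` is at most `k`. The inequality is
multiplied out so that the function makes sense at `t = 0` and `x = y`. -/
def slopeExcess (u : ℝ → ℝ → ℝ) (k t x y : ℝ) : ℝ :=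
  t * (u t x - u t y) - k * (x - y)

/-- Classical solutions of the Burgers equation `u_t + u u_x = ν u_xx` with viscosity `ν`:
continuous up to the initial time, with the equation and its derivatives required only at positive
times. -/
structure IsBurgersSolution (ν : ℝ) (u : ℝ → ℝ → ℝ) : Prop where
  continuousOn : ContinuousOn (Function.uncurry u) (Ici 0 ×ˢ univ)
  differentiableAt_time : ∀ t, 0 < t → ∀ x, DifferentiableAt ℝ (fun s ↦ u s x) t
  differentiable_space : ∀ t, 0 < t → Differentiable ℝ (u t)
  differentiable_deriv_space : ∀ t, 0 < t → Differentiable ℝ (deriv (u t))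
  equation : ∀ t, 0 < t → ∀ x,
    deriv (fun s ↦ u s x) t + u t x * deriv (u t) x - ν * deriv (deriv (u t)) x = 0

section SlopeExcess

variable {u : ℝ → ℝ → ℝ} {c k t x y : ℝ}

lemma hasDerivAt_slopeExcess_time (hx : DifferentiableAt ℝ (fun s ↦ u s x) t)
    (hy : DifferentiableAt ℝ (fun s ↦ u s y) t) :
    HasDerivAt (fun s ↦ slopeExcess u k s x y)
      (u t x - u t y + t * (deriv (fun s ↦ u s x) t - deriv (fun s ↦ u s y) t)) t := by
  simpa only [slopeExcess, one_mul, id_eq] using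
    ((hasDerivAt_id t).fun_mul (hx.hasDerivAt.fun_sub hy.hasDerivAt)).sub_const (k * (x - y))

lemma derivs_of_slopeExcess_max (hu : Differentiable ℝ (u t))
    (hu' : Differentiable ℝ (deriv (u t))) (hyx : y < x)
    (hmax : ∀ x' y', y' ≤ x' → slopeExcess u k t x' y' ≤ slopeExcess u k t x y) :
    (t * deriv (u t) x = k ∧ t * deriv (u t) y = k) ∧
      t * deriv (deriv (u t)) x ≤ 0 ∧ 0 ≤ t * deriv (deriv (u t)) y := by
  let g : ℝ → ℝ := fun z ↦ t * u t z - k * z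
  have hg (z : ℝ) : HasDerivAt g (t * deriv (u t) z - k) z := by
    simpa only [mul_one, id_eq] using
      ((hu z).hasDerivAt.const_mul t).fun_sub ((hasDerivAt_id z).const_mul k)
  have hg' (z : ℝ) : HasDerivAt (fun z ↦ t * deriv (u t) z - k) (t * deriv (deriv (u t)) z) z :=
    ((hu' z).hasDerivAt.const_mul t).sub_const k
  have hsplit (x' y' : ℝ) : slopeExcess u k t x' y' = g x' - g y' := by
    simp only [slopeExcess, g]
    ring
  simp only [hsplit] at hmax
  have hmax_x : IsLocalMax g x := by
    filter_upwards [lt_mem_nhds hyx] with z hz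
    exact (sub_le_sub_iff_right _).mp (hmax z y hz.le)
  have hmin_y : IsLocalMin g y := by
    filter_upwards [gt_mem_nhds hyx] with z hz
    exact (sub_le_sub_iff_left _).mp (hmax x z hz.le)
  exact ⟨⟨sub_eq_zero.mp (hmax_x.hasDerivAt_eq_zero (hg x)),
      sub_eq_zero.mp (hmin_y.hasDerivAt_eq_zero (hg y))⟩,
    second_deriv_nonpos_of_isLocalMax hg (hg' x) hmax_x,
    second_deriv_nonneg_of_isLocalMin hg (hg' y) hmin_y⟩

-- Replacing `x - y` by its residue modulo the period `c` can only increase `slopeExcess`, and `y`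
-- may then be moved into one period, so a maximum over a compact box is global.
lemma exists_slopeExcess_max {T : ℝ} (hu : ContinuousOn (Function.uncurry u) (Ici 0 ×ˢ univ))
    (hc : 0 < c) (hper : ∀ t, 0 ≤ t → Function.Periodic (u t) c) (hk : 0 ≤ k) (hT : 0 ≤ T) :
    ∃ t ∈ Icc 0 T, ∃ x y, y ≤ x ∧
      ∀ t' ∈ Icc 0 T, ∀ x' y', y' ≤ x' → slopeExcess u k t' x' y' ≤ slopeExcess u k t x y := by
  let K : Set (ℝ × ℝ × ℝ) := Icc 0 T ×ˢ Icc 0 c ×ˢ Icc 0 c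
  let F : ℝ × ℝ × ℝ → ℝ := fun p ↦ slopeExcess u k p.1 (p.2.1 + p.2.2) p.2.1
  have hK : IsCompact K := isCompact_Icc.prod (isCompact_Icc.prod isCompact_Icc)
  have hF : ContinuousOn F K := by
    have hcomp {g : ℝ × ℝ × ℝ → ℝ} (hg : Continuous g) : ContinuousOn (fun p ↦ u p.1 (g p)) K :=
      hu.comp (continuous_fst.prodMk hg).continuousOn fun _ hp ↦ ⟨hp.1.1, mem_univ _⟩
    have hleft : ContinuousOn (fun p : ℝ × ℝ × ℝ ↦ u p.1 (p.2.1 + p.2.2)) K :=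
      hcomp (by fun_prop)
    have hright : ContinuousOn (fun p : ℝ × ℝ × ℝ ↦ u p.1 p.2.1) K := hcomp (by fun_prop)
    exact (continuousOn_fst.mul (hleft.sub hright)).sub (by fun_prop)
  obtain ⟨⟨t, y, h⟩, ⟨ht, -, hh⟩, hmax⟩ :=
    hK.exists_isMaxOn ⟨(0, 0, 0), by simp [K, hT, hc.le]⟩ hF
  refine ⟨t, ht, y + h, y, le_add_of_nonneg_right hh.1, fun t' ht' x' y' hyx' ↦ ?_⟩
  obtain ⟨h', hh', hle, heq⟩ : ∃ h' ∈ Icc 0 c, h' ≤ x' - y' ∧ u t' x' = u t' (y' + h') := by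
    obtain hlt | hge := lt_or_ge (x' - y') c
    · exact ⟨x' - y', ⟨sub_nonneg.mpr hyx', hlt.le⟩, le_rfl, by rw [add_sub_cancel]⟩
    · obtain ⟨h', hh', heq⟩ := ((hper t' ht'.1).const_add y').exists_mem_Ico₀ hc (x' - y')
      exact ⟨h', Ico_subset_Icc_self hh', hh'.2.le.trans hge, by rwa [add_sub_cancel] at heq⟩
  obtain ⟨y₀, hy₀, heq₀⟩ := Function.Periodic.exists_mem_Ico₀
    (f := fun z ↦ u t' (z + h') - u t' z) (((hper t' ht'.1).add_const h').sub (hper t' ht'.1)) hc y'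
  calc slopeExcess u k t' x' y'
      ≤ t' * (u t' (y' + h') - u t' y') - k * h' := by
        rw [slopeExcess, heq]
        gcongr
    _ = F (t', y₀, h') := by
        simp only [F, slopeExcess, add_sub_cancel_left, heq₀]
    _ ≤ F (t, y, h) := hmax ⟨ht', Ico_subset_Icc_self hy₀, hh'⟩

end SlopeExcess

namespace IsBurgersSolution

variable {ν c k t x y : ℝ} {u : ℝ → ℝ → ℝ}

lemma slopeExcess_nonpos_of_max (h : IsBurgersSolution ν u) (hν : 0 ≤ ν) (hk : 1 < k)
    (ht : 0 < t) (hyx : y < x)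
    (hmax : ∀ t' ∈ Icc 0 t, ∀ x' y', y' ≤ x' → slopeExcess u k t' x' y' ≤ slopeExcess u k t x y) :
    slopeExcess u k t x y ≤ 0 := by
  by_contra! hpos
  obtain ⟨⟨hux, huy⟩, huxx, huyy⟩ := derivs_of_slopeExcess_max (h.differentiable_space t ht)
    (h.differentiable_deriv_space t ht) hyx (hmax t (right_mem_Icc.mpr ht.le))
  have htime : 0 ≤ u t x - u t y + t * (deriv (fun s ↦ u s x) t - deriv (fun s ↦ u s y) t) :=
    deriv_nonneg_of_isLocalMaxOn_Icc_right ht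
      (hasDerivAt_slopeExcess_time (h.differentiableAt_time t ht x)
        (h.differentiableAt_time t ht y)).hasDerivWithinAt
      (IsMaxOn.localize fun s hs ↦ hmax s hs x y hyx.le)
  have hrate : u t x - u t y + t * (deriv (fun s ↦ u s x) t - deriv (fun s ↦ u s y) t) =
      (1 - k) * (u t x - u t y)
        + ν * (t * deriv (deriv (u t)) x - t * deriv (deriv (u t)) y) := by
    linear_combination t * h.equation t ht x - t * h.equation t ht y - u t x * hux + u t y * huy
  have hgap : 0 < u t x - u t y := by
    refine pos_of_mul_pos_right ?_ ht.le
    have : 0 < k * (x - y) := mul_pos (one_pos.trans hk) (sub_pos.mpr hyx)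
    unfold slopeExcess at hpos
    linarith
  have hconv : (1 - k) * (u t x - u t y) < 0 := mul_neg_of_neg_of_pos (by linarith) hgap
  have hvisc : ν * (t * deriv (deriv (u t)) x - t * deriv (deriv (u t)) y) ≤ 0 :=
    mul_nonpos_of_nonneg_of_nonpos hν (by linarith)
  linarith

lemma slopeExcess_nonpos (h : IsBurgersSolution ν u) (hν : 0 ≤ ν) (hc : 0 < c)
    (hper : ∀ t, 0 ≤ t → Function.Periodic (u t) c) (hk : 1 < k) (ht : 0 ≤ t) (hyx : y ≤ x) :
    slopeExcess u k t x y ≤ 0 := by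
  have hk₀ : 0 ≤ k := zero_le_one.trans hk.le
  obtain ⟨t₀, ht₀, x₀, y₀, hyx₀, hmax⟩ := exists_slopeExcess_max h.continuousOn hc hper hk₀ ht
  refine (hmax t (right_mem_Icc.mpr ht) x y hyx).trans ?_
  obtain rfl | htpos := ht₀.1.eq_or_lt
  · simpa [slopeExcess] using mul_nonneg hk₀ (sub_nonneg.mpr hyx₀)
  obtain rfl | hlt := hyx₀.eq_or_lt
  · simp [slopeExcess]
  exact h.slopeExcess_nonpos_of_max hν hk htpos hlt fun t' ht' ↦
    hmax t' (Icc_subset_Icc_right ht₀.2 ht')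

lemma monotone_sub_mul (h : IsBurgersSolution ν u) (hν : 0 ≤ ν) (hc : 0 < c)
    (hper : ∀ t, 0 ≤ t → Function.Periodic (u t) c) (ht : 0 ≤ t) :
    Monotone fun x ↦ x - t * u t x := by
  intro y x hyx
  have hlim : Tendsto (fun k ↦ slopeExcess u k t x y) (𝓝[>] 1) (𝓝 (slopeExcess u 1 t x y)) := by
    refine Continuous.continuousWithinAt ?_
    unfold slopeExcess
    fun_prop
  have hle : slopeExcess u 1 t x y ≤ 0 := le_of_tendsto hlim <| by
    filter_upwards [self_mem_nhdsWithin] with k hk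
    exact h.slopeExcess_nonpos hν hc hper hk ht hyx
  unfold slopeExcess at hle
  linarith

end IsBurgersSolution

lemma isBurgersSolution_of_contDiff {ν : ℝ} {u : ℝ → ℝ → ℝ}
    (hu : ContDiff ℝ 2 (Function.uncurry u))
    (hpde : ∀ t, 0 < t → ∀ x,
      deriv (fun s ↦ u s x) t + u t x * deriv (u t) x - ν * deriv (deriv (u t)) x = 0) :
    IsBurgersSolution ν u where
  continuousOn := hu.continuous.continuousOn
  differentiableAt_time _ _ _ :=
    (hu.comp (contDiff_id.prodMk contDiff_const)).differentiable two_ne_zero _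
  differentiable_space _ _ :=
    (hu.comp (contDiff_const.prodMk contDiff_id)).differentiable two_ne_zero
  differentiable_deriv_space _ _ :=
    (hu.comp (contDiff_const.prodMk contDiff_id)).differentiable_deriv_two
  equation := hpde

theorem oleinik_free_burgers_general {ν c : ℝ} {u : ℝ → ℝ → ℝ} (h : IsBurgersSolution ν u)
    (hν : 0 ≤ ν) (hc : 0 < c) (hper : ∀ t, 0 ≤ t → Function.Periodic (u t) c) :
    ∀ t, 0 ≤ t → ∀ x, t * deriv (u t) x ≤ 1 := by
  intro t ht x
  obtain rfl | htpos := ht.eq_or_lt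
  · simp
  have hderiv : HasDerivAt (fun x ↦ x - t * u t x) (1 - t * deriv (u t) x) x :=
    (hasDerivAt_id x).fun_sub ((h.differentiable_space t htpos x).hasDerivAt.const_mul t)
  rw [← sub_nonneg, ← hderiv.deriv]
  exact (h.monotone_sub_mul hν hc hper ht).deriv_nonneg

/-- **Oleinik maximum principle for the free Burgers equation.**
Let `ν ∈ (0,1]` and let `u : [0,∞) × S¹ → ℝ` be a `C^∞`-smooth function
(`1`-periodic in `x`) with zero mean value in `x` for all `t ≥ 0`, satisfying
`u_t + u u_x − ν u_{xx} = 0` pointwise. Then `t · u_x(t,x) ≤ 1` for all `t ≥ 0`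
and all `x`. -/
theorem oleinik_free_burgers
    (ν : ℝ) (hν : ν ∈ Set.Ioc (0:ℝ) 1)
    (u : ℝ → ℝ → ℝ)
    (hsmooth : ContDiff ℝ (⊤ : ℕ∞) (fun p : ℝ × ℝ => u p.1 p.2))
    (hper : ∀ t x, u t (x + 1) = u t x)
    (hmean : ∀ t, 0 ≤ t → ∫ x in Set.Ioc (0:ℝ) 1, u t x = 0)
    (hpde : ∀ t, 0 ≤ t → ∀ x,
      deriv (fun s => u s x) t + u t x * deriv (u t) x - ν * deriv (deriv (u t)) x = 0) :
    ∀ t, 0 ≤ t → ∀ x, t * deriv (u t) x ≤ 1 :=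
  oleinik_free_burgers_general
    (isBurgersSolution_of_contDiff (hsmooth.of_le (WithTop.coe_le_coe.2 le_top))
      fun t ht ↦ hpde t ht.le) hν.1.le one_pos fun t _ ↦ hper t

end BurgersTurb
end
end
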